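/- Let n ≥ 2, j ≥ 3, 0 < δ < 1, and let β ≥ 0 and α be real numbers such that either (n−3)/2 < β < (n−1)/2 and α ≤ β + (j−1)(β − (n−3)/2), or β ≥ (n−1)/2 and α < β + (j−1). Let 𝐚 = (a₁,…,a_{j−1}) be a multi-index with each a_i ∈ {0,1}. Then there exist γ > 0 (possibly depending on β) and a constant C = C(n, j, α, β, δ, χ) such that for every Schwartz function q on ℝⁿ and every 𝐫 = (r₁,…,r_{j−1}) with r_i ∈ (1−δ, 1+δ) whenever a_i = 1 and r_i ∈ (0,∞) whenever a_i = 0, the partial derivative ∂_𝐫^𝐚 ( χ(η) S_{j,𝐫}(q)(η) ) := ( ∏_{i : a_i = 1} ∂_{r_i} ) ( χ(η) S_{j,𝐫}(q)(η) ) exists for η ≠ 0 and satisfies ‖ ∂_𝐫^𝐚 ( χ(·) S_{j,𝐫}(q)(·) ) ‖_{L²_{α−|𝐚|}} ≤ C ( ∏_{i=1}^{j−1} (1+r_i)^{−γ} ) ‖q‖^j_{W^{β,2}_4}, where |𝐚| = a₁+⋯+a_{j−1}. -/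

import Mathlib

open MeasureTheory Filter Set
open scoped ENNReal RealInnerProductSpace

noncomputable section

abbrev Euc (n : ℕ) := EuclideanSpace ℝ (Fin n)

/-- The Japanese bracket `⟨x⟩ = (1+|x|²)^{1/2}`. -/
def jap {n : ℕ} (x : Euc n) : ℝ := Real.sqrt (1 + ‖x‖ ^ 2)

/-- The Ewald sphere measure `σ_{rη}`: the `(n-1)`-dimensional Hausdorff measure restricted
to `Γ_r(η) = {ξ : |ξ - η/2| = r|η|/2}`. -/
def ewaldM (n : ℕ) (r : ℝ) (η : Euc n) : Measure (Euc n) :=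
  (MeasureTheory.Measure.hausdorffMeasure ((n : ℝ) - 1)).restrict
    (Metric.sphere ((2 : ℝ)⁻¹ • η) (r * ‖η‖ / 2))

/-- The Fourier transform `f̂(ξ) = ∫ e^{-iξ·x} f(x) dx`. -/
def ft {n : ℕ} (f : Euc n → ℂ) (ξ : Euc n) : ℂ :=
  ∫ x : Euc n, Complex.exp (-Complex.I * ((⟪ξ, x⟫ : ℝ) : ℂ)) * f x

/-- `⟨D⟩^β f`: inverse Fourier transform of `⟨ξ⟩^β f̂(ξ)`. -/
def besselD {n : ℕ} (β : ℝ) (f : Euc n → ℂ) (x : Euc n) : ℂ :=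
  (((2 * Real.pi) ^ n : ℝ)⁻¹ : ℝ) •
    ∫ ξ : Euc n, Complex.exp (Complex.I * ((⟪ξ, x⟫ : ℝ) : ℂ)) *
      (((jap ξ ^ β : ℝ) : ℂ) * ft f ξ)

/-- The weighted Sobolev norm `‖f‖_{W^{β,2}_δ} = ‖⟨·⟩^δ ⟨D⟩^β f‖_{L²}`. -/
def wSobNorm {n : ℕ} (β δ : ℝ) (f : Euc n → ℂ) : ℝ≥0∞ :=
  eLpNorm (fun x : Euc n => (jap x ^ δ : ℝ) • besselD β f x) 2 volume

/-- The spherical operator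
`S_r(q)(η) = (2/(|η|(1+r))) ∫_{Γ_r(η)} q̂(ξ) q̂(η-ξ) dσ_{rη}(ξ)`. -/
def Sr {n : ℕ} (r : ℝ) (q : Euc n → ℂ) (η : Euc n) : ℂ :=
  ((2 / (‖η‖ * (1 + r))) : ℝ) • ∫ ξ, ft q ξ * ft q (η - ξ) ∂(ewaldM n r η)

/-- `K_r(g₁,g₂)(η) = (1/|η|) ∫_{Γ_r(η)} |g₁(ξ)||g₂(η-ξ)| dσ_{rη}(ξ)`. -/
def Kr {n : ℕ} (r : ℝ) (g₁ g₂ : Euc n → ℂ) (η : Euc n) : ℝ :=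
  ‖η‖⁻¹ * ∫ ξ, ‖g₁ ξ‖ * ‖g₂ (η - ξ)‖ ∂(ewaldM n r η)

/-- The `i`-th difference in the chain `η - ξ₀, ξ₀ - ξ₁, …, ξ_{k-2} - ξ_{k-1}, ξ_{k-1}`
(`0`-indexed version of `η-ξ₁, ξ₁-ξ₂, …, ξ_{j-2}-ξ_{j-1}, ξ_{j-1}` with `k = j-1`). -/
def chainDiff {n : ℕ} (k : ℕ) (η : Euc n) (ξ : Fin k → Euc n) (i : Fin (k + 1)) : Euc n :=
  (if h : (i : ℕ) = 0 then η else ξ ⟨(i : ℕ) - 1, by have := i.isLt; omega⟩) -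
    (if h : (i : ℕ) < k then ξ ⟨(i : ℕ), h⟩ else 0)

/-- `S_{j,𝐫}(q)(η)` with `j = k + 1`:
`(∏ᵢ 2/(1+rᵢ)) |η|^{-(j-1)} ∫_{Γ_{r₁}(η)}⋯∫_{Γ_{r_{j-1}}(η)} q̂(η-ξ₁) ∏ q̂(ξᵢ-ξ_{i+1}) q̂(ξ_{j-1}) dσ`. -/
def Sj {n : ℕ} (k : ℕ) (r : Fin k → ℝ) (q : Euc n → ℂ) (η : Euc n) : ℂ :=
  (((∏ i : Fin k, 2 / (1 + r i)) * ‖η‖ ^ (-(k : ℝ))) : ℝ) •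
    ∫ ξ : Fin k → Euc n, ∏ i : Fin (k + 1), ft q (chainDiff k η ξ i)
      ∂(Measure.pi fun i => ewaldM n (r i) η)

/-- Iterated partial derivatives with respect to the variables `r_i`, `i ∈ l`. -/
def partialR {k : ℕ} (l : List (Fin k)) (G : (Fin k → ℝ) → ℂ) : (Fin k → ℝ) → ℂ :=
  l.foldr (fun i H r => deriv (fun t : ℝ => H (Function.update r i t)) (r i)) G

/-- The list of indices `i` with `a i = 1` for a multi-index `a : Fin k → Bool`. -/
def onesList {k : ℕ} (a : Fin k → Bool) : List (Fin k) :=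
  (List.finRange k).filter fun i => a i

/-!
In the polar coordinates `ξᵢ = η/2 + rᵢ (|η|/2) θᵢ` the operator `S_{k+1,𝐫}(q)(η)` is a product of
explicit functions of the `rᵢ` times the integral of the chain product `q̂(η - ξ₁) ⋯ q̂(ξ_k)` over
unit spheres. Each `∂_{rᵢ}` either falls on an explicit factor, where it is harmless as
`rᵢ > 1 - δ`, or differentiates two neighbouring factors `q̂` and costs a factor `|η|`; this is the
loss of `|𝐚|` in the weight.

At the price of one more derivative of `q̂` per neighbour, an integral over the sphere of radius
`ρᵢ = rᵢ|η|/2` is bounded by one over the annulus `ρᵢ ≤ |y| ≤ ρᵢ + 1`. The derivatives of `q̂` up to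
order four, the largest number that can fall on a factor, are `≤ ⟨·⟩^{-β} h` with
`‖h‖_{L²} ≲ ‖q‖_{W^{β,2}_4}`. The `k + 1` differences along the chain add up to `η`, so one of them
has length `≥ |η|/(k + 1)` and yields the decay `⟨η⟩^{-β}`. Cauchy-Schwarz separates the other `k`
weights from the product of the `h`: the latter leaves the square root of a convolution power of
`h²`, whose square is integrable in `η`, and each weight contributes
`(∫_{ρ ≤ |y| ≤ ρ + 1} ⟨x - y⟩^{-p} dy)^{1/2} ≲ (1 + ρ)^{(n-1-p)/2}` for `0 ≤ p < n - 1`, `p ≤ 2β`.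
With `p = n - 3 + 2e`, `e ∈ (0, 1)`, and the factors `2 / (1 + rᵢ)` and `|η|^{-1}`, every sphere
gains `⟨η⟩^{-e} (1 + rᵢ)^{-e}`, whence `γ = e` and the condition `α ≤ β + k e`.
-/

/-! ### Surface measure of the sphere -/

section HausdorffDensity

open Metric Measure

/-- The balls `B(x, r)` are the pairs `a = (x, r)`. Vitali's theorem selects disjoint ones whose
fourfold enlargements still cover. -/
theorem exists_countable_disjoint_closedBall_cover {X : Type*} [MetricSpace X]
    [TopologicalSpace.SeparableSpace X] {U : Set X} (hU : IsOpen U) {ε : ℝ} (hε : 0 < ε) :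
    ∃ u : Set (X × ℝ), u.Countable ∧ (u.PairwiseDisjoint fun a => closedBall a.1 a.2) ∧
      (∀ a ∈ u, a.2 ∈ Ioc 0 ε ∧ closedBall a.1 a.2 ⊆ U) ∧
      U ⊆ ⋃ a ∈ u, closedBall a.1 (4 * a.2) := by
  let t : Set (X × ℝ) := {a | a.2 ∈ Ioc 0 ε ∧ closedBall a.1 a.2 ⊆ U}
  obtain ⟨u, hut, hdisj, hcover⟩ :=
    Vitali.exists_disjoint_subfamily_covering_enlargement_closedBall t Prod.fst Prod.snd ε
      (fun a ha => ha.1.2) 4 (by norm_num)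
  refine ⟨u, ?_, hdisj, hut, fun x hx => ?_⟩
  · refine hdisj.countable_of_nonempty_interior fun a ha => ⟨a.1, ?_⟩
    exact ball_subset_interior_closedBall (mem_ball_self (hut ha).1.1)
  · obtain ⟨r, hr, hrU⟩ := nhds_basis_closedBall.mem_iff.1 (hU.mem_nhds hx)
    have hmem : (x, min r ε) ∈ t :=
      ⟨⟨lt_min hr hε, min_le_right _ _⟩, (closedBall_subset_closedBall (min_le_left _ _)).trans hrU⟩
    obtain ⟨b, hb, hsub⟩ := hcover _ hmem
    exact mem_biUnion hb (hsub (mem_closedBall_self hmem.1.1.le))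

variable {X : Type*} [MetricSpace X] [TopologicalSpace.SeparableSpace X]
  [MeasurableSpace X] [BorelSpace X] {μ : Measure X} {d : ℝ} {c : ℝ≥0∞}

theorem hausdorffMeasure_le_of_isOpen (hd : 0 ≤ d) (hc : c ≠ 0) (hc' : c ≠ ∞)
    (h : ∀ x, ∀ r ∈ Ioc (0 : ℝ) 1, c * ENNReal.ofReal r ^ d ≤ μ (closedBall x r))
    {U : Set X} (hU : IsOpen U) : μH[d] U ≤ 8 ^ d / c * μ U := by
  have hpos (N : ℕ) : (0 : ℝ) < 1 / (N + 1) := Nat.one_div_pos_of_nat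
  choose u hcount hdisj hball hcover using fun N : ℕ =>
    exists_countable_disjoint_closedBall_cover hU (hpos N)
  have (N : ℕ) : Countable (u N) := (hcount N).to_subtype
  have hdiam (N : ℕ) (a : u N) :
      ediam (closedBall a.1.1 (4 * a.1.2)) ≤ 8 * ENNReal.ofReal a.1.2 := by
    have h0 : 0 ≤ 4 * a.1.2 := by have := (hball N a a.2).1.1; positivity
    rw [← closedEBall_ofReal h0, ENNReal.ofReal_mul (by norm_num), ENNReal.ofReal_ofNat]
    refine ediam_closedEBall_le.trans (le_of_eq ?_)
    rw [← mul_assoc]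
    norm_num
  have hsum (N : ℕ) : ∑' a : u N, ediam (closedBall a.1.1 (4 * a.1.2)) ^ d ≤ 8 ^ d / c * μ U :=
    calc ∑' a : u N, ediam (closedBall a.1.1 (4 * a.1.2)) ^ d
        ≤ ∑' a : u N, 8 ^ d / c * μ (closedBall a.1.1 a.1.2) := by
          refine ENNReal.tsum_le_tsum fun a => ?_
          obtain ⟨⟨ha0, haN⟩, -⟩ := hball N a a.2
          have ha1 : a.1.2 ≤ 1 := haN.trans (by rw [div_le_one (by positivity)]; simp)
          calc ediam (closedBall a.1.1 (4 * a.1.2)) ^ d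
              ≤ (8 * ENNReal.ofReal a.1.2) ^ d := by gcongr; exact hdiam N a
            _ = 8 ^ d / c * (c * ENNReal.ofReal a.1.2 ^ d) := by
              rw [ENNReal.mul_rpow_of_nonneg _ _ hd, ← mul_assoc, ENNReal.div_mul_cancel hc hc']
            _ ≤ 8 ^ d / c * μ (closedBall a.1.1 a.1.2) := by gcongr; exact h _ _ ⟨ha0, ha1⟩
      _ = 8 ^ d / c * μ (⋃ a ∈ u N, closedBall a.1 a.2) := by
          rw [ENNReal.tsum_mul_left, measure_biUnion (hcount N) (hdisj N)
            fun a _ => isClosed_closedBall.measurableSet]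
      _ ≤ 8 ^ d / c * μ U := by
          gcongr
          exact iUnion₂_subset fun a ha => (hball N a ha).2
  refine (hausdorffMeasure_le_liminf_tsum (l := atTop) d U
    (fun N : ℕ => 8 * ENNReal.ofReal (1 / (N + 1))) ?_
    (fun N (a : u N) => closedBall a.1.1 (4 * a.1.2)) (Eventually.of_forall fun N a => ?_)
    (Eventually.of_forall fun N => ?_)).trans ?_
  · have := ENNReal.Tendsto.const_mul (a := 8)
      (ENNReal.tendsto_ofReal tendsto_one_div_add_atTop_nhds_zero_nat) (by simp)
    simpa using this
  · refine (hdiam N a).trans ?_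
    gcongr
    exact (hball N a a.2).1.2
  · rw [iUnion_subtype]
    exact hcover N
  · exact liminf_le_of_le (by isBoundedDefault) fun b hb =>
      let ⟨N, hN⟩ := hb.exists
      hN.trans (hsum N)

theorem hausdorffMeasure_le_smul [IsFiniteMeasure μ] (hd : 0 ≤ d) (hc : c ≠ 0) (hc' : c ≠ ∞)
    (h : ∀ x, ∀ r ∈ Ioc (0 : ℝ) 1, c * ENNReal.ofReal r ^ d ≤ μ (closedBall x r)) :
    μH[d] ≤ (8 ^ d / c) • μ := by
  have hfin : 8 ^ d / c ≠ ∞ :=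
    ENNReal.div_ne_top (ENNReal.rpow_ne_top_of_nonneg hd (by norm_num)) hc
  have : IsFiniteMeasure ((8 ^ d / c) • μ) := μ.smul_finite hfin
  refine Measure.le_iff.2 fun A _ => ?_
  rw [A.measure_eq_iInf_isOpen ((8 ^ d / c) • μ)]
  refine le_iInf₂ fun U hAU => le_iInf fun hU => ?_
  exact (measure_mono hAU).trans (hausdorffMeasure_le_of_isOpen hd hc hc' h hU)

end HausdorffDensity

section Polar

open Metric Measure Module

variable {E : Type*} [NormedAddCommGroup E] [NormedSpace ℝ E] [FiniteDimensional ℝ E]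
  [Nontrivial E] [MeasurableSpace E] [BorelSpace E] (μ : Measure E) [μ.IsAddHaarMeasure]

theorem lintegral_eq_lintegral_toSphere {F : E → ℝ≥0∞} (hF : Measurable F) :
    ∫⁻ x, F x ∂μ = ∫⁻ t in Ioi (0 : ℝ),
      ENNReal.ofReal (t ^ (finrank ℝ E - 1)) * ∫⁻ θ, F (t • (θ : E)) ∂μ.toSphere := by
  have hG : Measurable fun p : sphere (0 : E) 1 × Ioi (0 : ℝ) => F ((p.2 : ℝ) • (p.1 : E)) := by
    fun_prop
  calc ∫⁻ x, F x ∂μ = ∫⁻ x : ({0}ᶜ : Set E), F x ∂(μ.comap (↑)) := by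
        rw [lintegral_subtype_comap (measurableSet_singleton (0 : E)).compl,
          restrict_compl_singleton]
    _ = ∫⁻ p, F ((p.2 : ℝ) • (p.1 : E)) ∂(μ.toSphere.prod (volumeIoiPow (finrank ℝ E - 1))) := by
        rw [← μ.measurePreserving_homeomorphUnitSphereProd.lintegral_comp hG]
        refine lintegral_congr fun x => ?_
        simp [smul_smul, norm_ne_zero_iff.2 x.2]
    _ = ∫⁻ t : Ioi (0 : ℝ), ∫⁻ θ, F ((t : ℝ) • (θ : E)) ∂μ.toSphere
          ∂(volumeIoiPow (finrank ℝ E - 1)) := lintegral_prod_symm _ hG.aemeasurable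
    _ = _ := by
        have hinner : Measurable fun t : Ioi (0 : ℝ) =>
            ∫⁻ θ : sphere (0 : E) 1, F ((t : ℝ) • (θ : E)) ∂μ.toSphere :=
          hG.lintegral_prod_left'
        rw [volumeIoiPow, lintegral_withDensity_eq_lintegral_mul _ (by fun_prop) hinner]
        exact lintegral_subtype_comap measurableSet_Ioi fun t : ℝ =>
          ENNReal.ofReal (t ^ (finrank ℝ E - 1)) * ∫⁻ θ, F (t • (θ : E)) ∂μ.toSphere

omit [FiniteDimensional ℝ E] [Nontrivial E] [MeasurableSpace E] [BorelSpace E] in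
theorem abs_sub_one_le_norm_smul_sub {x θ : E} (hx : ‖x‖ = 1) (hθ : ‖θ‖ = 1) {t : ℝ} (ht : 0 ≤ t) :
    |t - 1| ≤ ‖t • θ - x‖ := by
  simpa [norm_smul, hx, hθ, abs_of_nonneg ht] using abs_norm_sub_norm_le (t • θ) x

omit [FiniteDimensional ℝ E] [Nontrivial E] [MeasurableSpace E] [BorelSpace E] in
theorem norm_sub_le_two_mul_norm_smul_sub {x θ : E} (hx : ‖x‖ = 1) (hθ : ‖θ‖ = 1) {t : ℝ}
    (ht : 0 ≤ t) : ‖θ - x‖ ≤ 2 * ‖t • θ - x‖ := by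
  have hradial : ‖θ - t • θ‖ = |t - 1| := by
    rw [show θ - t • θ = (1 - t) • θ by rw [sub_smul, one_smul], norm_smul, hθ, mul_one,
      Real.norm_eq_abs, abs_sub_comm]
  linarith [norm_sub_le_norm_sub_add_norm_sub θ (t • θ) x, abs_sub_one_le_norm_smul_sub hx hθ ht]

/-- The ball `B(x, r / 2)` lies in the cone over the cap `B(x, r)`, between the radii `1 - r / 2`
and `1 + r / 2`. -/
theorem addHaar_ball_le_toSphere_closedBall (x : sphere (0 : E) 1) {r : ℝ} (hr : r ∈ Ioc 0 1) :
    μ (ball (x : E) (r / 2)) ≤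
      ENNReal.ofReal (2 ^ (finrank ℝ E - 1) * r) * μ.toSphere (closedBall x r) := by
  have hx : ‖(x : E)‖ = 1 := norm_eq_of_mem_sphere x
  set p := finrank ℝ E - 1
  set I := Ioo (1 - r / 2) (1 + r / 2)
  have hsector (t : ℝ) (ht : 0 < t) (θ : sphere (0 : E) 1)
      (hθ : t • (θ : E) ∈ ball (x : E) (r / 2)) : t ∈ I ∧ θ ∈ closedBall x r := by
    rw [mem_ball_iff_norm] at hθ
    have h1 := abs_sub_one_le_norm_smul_sub hx (norm_eq_of_mem_sphere θ) ht.le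
    have h2 := norm_sub_le_two_mul_norm_smul_sub hx (norm_eq_of_mem_sphere θ) ht.le
    refine ⟨⟨?_, ?_⟩, ?_⟩
    · linarith [neg_abs_le (t - 1)]
    · linarith [le_abs_self (t - 1)]
    · rw [mem_closedBall, Subtype.dist_eq, dist_eq_norm]
      linarith
  have hslice : ∀ t ∈ Ioi (0 : ℝ), ENNReal.ofReal (t ^ p) *
      ∫⁻ θ, (ball (x : E) (r / 2)).indicator 1 (t • (θ : E)) ∂μ.toSphere ≤
      I.indicator (fun _ => ENNReal.ofReal (2 ^ p) * μ.toSphere (closedBall x r)) t := by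
    intro t (ht : 0 < t)
    by_cases htI : t ∈ I
    · rw [indicator_of_mem htI, ← lintegral_indicator_one isClosed_closedBall.measurableSet]
      gcongr with θ
      · linarith [htI.2, hr.2]
      · by_cases hθ : t • (θ : E) ∈ ball (x : E) (r / 2)
        · rw [indicator_of_mem hθ, indicator_of_mem (hsector t ht θ hθ).2]
          rfl
        · rw [indicator_of_notMem hθ]
          exact zero_le
    · rw [indicator_of_notMem htI]
      simp_rw [indicator_of_notMem fun hθ => htI (hsector t ht _ hθ).1]
      simp
  calc μ (ball (x : E) (r / 2)) = ∫⁻ y, (ball (x : E) (r / 2)).indicator 1 y ∂μ :=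
        (lintegral_indicator_one measurableSet_ball).symm
    _ = _ := lintegral_eq_lintegral_toSphere μ (measurable_one.indicator measurableSet_ball)
    _ ≤ _ := setLIntegral_mono' measurableSet_Ioi hslice
    _ ≤ _ := setLIntegral_le_lintegral _ _
    _ = _ := by
      rw [lintegral_indicator_const measurableSet_Ioo, Real.volume_Ioo,
        mul_right_comm, ← ENNReal.ofReal_mul (by positivity)]
      ring_nf

theorem exists_mul_rpow_le_toSphere_closedBall :
    ∃ c : ℝ≥0∞, c ≠ 0 ∧ c ≠ ∞ ∧ ∀ x : sphere (0 : E) 1, ∀ r ∈ Ioc (0 : ℝ) 1,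
      c * ENNReal.ofReal r ^ ((finrank ℝ E : ℝ) - 1) ≤ μ.toSphere (closedBall x r) := by
  set p := finrank ℝ E - 1
  have hp : finrank ℝ E = p + 1 := (Nat.sub_add_cancel finrank_pos).symm
  refine ⟨μ (ball 0 1) * ENNReal.ofReal (2 ^ (2 * p + 1))⁻¹,
    mul_ne_zero (measure_ball_pos μ 0 one_pos).ne' (ENNReal.ofReal_pos.2 (by positivity)).ne',
    ENNReal.mul_ne_top measure_ball_lt_top.ne ENNReal.ofReal_ne_top, fun x r hr => ?_⟩
  have hr0 := hr.1
  have hcap := addHaar_ball_le_toSphere_closedBall μ x hr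
  rw [μ.addHaar_ball_of_pos _ (by positivity), hp, Nat.add_sub_cancel] at hcap
  have h0 : ENNReal.ofReal (2 ^ p * r) ≠ 0 := (ENNReal.ofReal_pos.2 (by positivity)).ne'
  refine (ENNReal.mul_le_mul_iff_right h0 ENNReal.ofReal_ne_top).1 (le_trans (le_of_eq ?_) hcap)
  rw [hp, Nat.cast_add_one, add_sub_cancel_right, ENNReal.rpow_natCast, ← ENNReal.ofReal_pow hr0.le,
    mul_assoc (μ _), mul_left_comm, mul_comm, ← ENNReal.ofReal_mul (by positivity),
    ← ENNReal.ofReal_mul (by positivity)]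
  congr 2
  rw [div_pow]
  field_simp
  ring

/-- The hypersurface measure of the unit sphere, normalised as in `ewaldM`. -/
def sphereMeasure (n : ℕ) : Measure (Euc n) :=
  μH[(n : ℝ) - 1].restrict (sphere 0 1)

theorem exists_sphereMeasure_le_smul_map_toSphere (m : ℕ) :
    ∃ C : NNReal, sphereMeasure (m + 1) ≤
      C • (volume : Measure (Euc (m + 1))).toSphere.map ((↑) : sphere _ 1 → Euc (m + 1)) := by
  obtain ⟨c, hc, hc', h⟩ :=
    exists_mul_rpow_le_toSphere_closedBall (volume : Measure (Euc (m + 1)))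
  have hd : 0 ≤ (finrank ℝ (Euc (m + 1)) : ℝ) - 1 := by simp
  have hle := hausdorffMeasure_le_smul hd hc hc' h
  have hC : 8 ^ ((finrank ℝ (Euc (m + 1)) : ℝ) - 1) / c ≠ ∞ :=
    ENNReal.div_ne_top (ENNReal.rpow_ne_top_of_nonneg hd (by norm_num)) hc
  lift 8 ^ ((finrank ℝ (Euc (m + 1)) : ℝ) - 1) / c to NNReal using hC with C
  refine ⟨C, ?_⟩
  have hmap := (isometry_subtype_coe (s := sphere (0 : Euc (m + 1)) 1)).map_hausdorffMeasure
    (d := (finrank ℝ (Euc (m + 1)) : ℝ) - 1) (Or.inl hd)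
  rw [Subtype.range_coe, finrank_euclideanSpace_fin] at hmap
  rw [sphereMeasure, ← hmap, ← Measure.map_smul]
  exact Measure.map_mono (by simpa using hle) measurable_subtype_coe

instance (m : ℕ) : IsFiniteMeasure (sphereMeasure (m + 1)) := by
  obtain ⟨C, hC⟩ := exists_sphereMeasure_le_smul_map_toSphere m
  exact isFiniteMeasure_of_le _ hC

/-- The closed annulus `ρ ≤ |y| ≤ ρ + 1`. -/
def unitAnnulus (n : ℕ) (ρ : ℝ) : Set (Euc n) :=
  {y | ‖y‖ ∈ Icc ρ (ρ + 1)}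

theorem measurableSet_unitAnnulus (n : ℕ) (ρ : ℝ) : MeasurableSet (unitAnnulus n ρ) :=
  measurable_norm measurableSet_Icc

theorem exists_lintegral_sphereMeasure_le_lintegral_unitAnnulus (m : ℕ) :
    ∃ C : NNReal, ∀ ρ : ℝ, 0 < ρ → ∀ F : Euc (m + 1) → ℝ≥0∞, Measurable F →
      ∫⁻ t in Icc ρ (ρ + 1), ∫⁻ θ, F (t • θ) ∂(sphereMeasure (m + 1)) ≤
        C * ENNReal.ofReal (ρ ^ m)⁻¹ * ∫⁻ x in unitAnnulus (m + 1) ρ, F x := by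
  obtain ⟨C, hC⟩ := exists_sphereMeasure_le_smul_map_toSphere m
  refine ⟨C, fun ρ hρ F hF => ?_⟩
  set τ := (volume : Measure (Euc (m + 1))).toSphere
  have hsphere (t : ℝ) : ∫⁻ θ, F (t • θ) ∂(sphereMeasure (m + 1)) ≤
      C * ∫⁻ θ, F (t • (θ : Euc (m + 1))) ∂τ := by
    refine (lintegral_mono' hC le_rfl).trans (le_of_eq ?_)
    rw [lintegral_smul_measure, lintegral_map (by fun_prop) measurable_subtype_coe]
    rfl
  have hannulus : ∀ t ∈ Icc ρ (ρ + 1), ∫⁻ θ, F (t • (θ : Euc (m + 1))) ∂τ ≤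
      ENNReal.ofReal (ρ ^ m)⁻¹ * (ENNReal.ofReal (t ^ m) *
        ∫⁻ θ, (unitAnnulus (m + 1) ρ).indicator F (t • (θ : Euc (m + 1))) ∂τ) := by
    intro t ht
    have hmem (θ : sphere (0 : Euc (m + 1)) 1) : t • (θ : Euc (m + 1)) ∈ unitAnnulus (m + 1) ρ := by
      rwa [unitAnnulus, mem_ofPred_eq, norm_smul, norm_eq_of_mem_sphere, mul_one,
        Real.norm_of_nonneg (hρ.le.trans ht.1)]
    simp_rw [indicator_of_mem (hmem _)]
    rw [← mul_assoc, ← ENNReal.ofReal_mul (by positivity)]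
    refine le_mul_of_one_le_left' (ENNReal.one_le_ofReal.2 ?_)
    rw [inv_mul_eq_div, one_le_div (by positivity)]
    exact pow_le_pow_left₀ hρ.le ht.1 m
  calc ∫⁻ t in Icc ρ (ρ + 1), ∫⁻ θ, F (t • θ) ∂(sphereMeasure (m + 1))
      ≤ ∫⁻ t in Icc ρ (ρ + 1), C * (ENNReal.ofReal (ρ ^ m)⁻¹ * (ENNReal.ofReal (t ^ m) *
        ∫⁻ θ, (unitAnnulus (m + 1) ρ).indicator F (t • (θ : Euc (m + 1))) ∂τ)) := by
        refine setLIntegral_mono' measurableSet_Icc fun t ht => (hsphere t).trans ?_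
        gcongr
        exact hannulus t ht
    _ = C * ENNReal.ofReal (ρ ^ m)⁻¹ * ∫⁻ t in Icc ρ (ρ + 1), ENNReal.ofReal (t ^ m) *
        ∫⁻ θ, (unitAnnulus (m + 1) ρ).indicator F (t • (θ : Euc (m + 1))) ∂τ := by
        rw [lintegral_const_mul' _ _ ENNReal.coe_ne_top,
          lintegral_const_mul' _ _ ENNReal.ofReal_ne_top, mul_assoc]
    _ ≤ C * ENNReal.ofReal (ρ ^ m)⁻¹ * ∫⁻ t in Ioi 0, ENNReal.ofReal (t ^ m) *
        ∫⁻ θ, (unitAnnulus (m + 1) ρ).indicator F (t • (θ : Euc (m + 1))) ∂τ := by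
        gcongr
        exact fun t ht => hρ.trans_le ht.1
    _ = C * ENNReal.ofReal (ρ ^ m)⁻¹ * ∫⁻ x in unitAnnulus (m + 1) ρ, F x := by
        rw [← lintegral_indicator (measurableSet_unitAnnulus _ ρ),
          lintegral_eq_lintegral_toSphere volume (hF.indicator (measurableSet_unitAnnulus _ ρ))]
        simp only [finrank_euclideanSpace_fin, Nat.add_sub_cancel, τ]

section SphericalWeight

theorem exists_lintegral_ball_norm_sub_rpow_le {s : ℝ} (hs : s < finrank ℝ E) :
    ∃ C : NNReal, ∀ x : E, ‖x‖ ≤ 1 →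
      ∫⁻ y in ball 0 1, ENNReal.ofReal (‖y - x‖ ^ (-s)) ∂μ ≤ C := by
  have hint : IntegrableOn (fun y : E => ‖y‖ ^ (-s)) (ball 0 2) μ :=
    integrableOn_ball_of_norm_le_rpow (C := 1) finrank_pos hs
      (ae_of_all _ fun y => by rw [one_mul, Real.norm_of_nonneg (by positivity)])
      (by fun_prop : Measurable fun y : E => ‖y‖ ^ (-s)).aestronglyMeasurable
  refine ⟨(∫⁻ y in ball 0 2, ENNReal.ofReal (‖y‖ ^ (-s)) ∂μ).toNNReal, fun x hx => ?_⟩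
  rw [ENNReal.coe_toNNReal (Integrable.lintegral_lt_top hint).ne,
    ← lintegral_indicator measurableSet_ball, ← lintegral_indicator measurableSet_ball,
    ← lintegral_add_right_eq_self _ x]
  refine lintegral_mono fun y => ?_
  by_cases hy : y + x ∈ ball (0 : E) 1
  · have hy2 : y ∈ ball (0 : E) 2 := by
      rw [mem_ball_zero_iff] at hy ⊢
      linarith [norm_sub_le (y + x) x, congrArg norm (add_sub_cancel_right y x)]
    rw [indicator_of_mem hy, indicator_of_mem hy2, add_sub_cancel_right]
  · rw [indicator_of_notMem hy]
    exact zero_le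

omit [FiniteDimensional ℝ E] [Nontrivial E] [MeasurableSpace E] [BorelSpace E] in
/-- On the radial segment `1 - |θ - x| / 4 < t < 1` the points `tθ` stay within `2|θ - x|` of `x`,
so the segment recovers the lost power of `|θ - x|`. -/
theorem ofReal_norm_sub_rpow_le_lintegral (N : ℕ) {p : ℝ} (hp : 0 ≤ p) {x θ : E} (hx : ‖x‖ = 1)
    (hθ : ‖θ‖ = 1) (hne : θ ≠ x) :
    ENNReal.ofReal (‖θ - x‖ ^ (-p)) ≤ ENNReal.ofReal (4 * 2 ^ (p + 1) * 2 ^ N) *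
      ∫⁻ t in Ioi (0 : ℝ), ENNReal.ofReal (t ^ N) *
        (ball 0 1).indicator (fun y => ENNReal.ofReal (‖y - x‖ ^ (-(p + 1)))) (t • θ) := by
  set d := ‖θ - x‖
  have hd0 : 0 < d := norm_pos_iff.2 (sub_ne_zero.2 hne)
  have hd2 : d ≤ 2 := (norm_sub_le _ _).trans (by rw [hx, hθ]; norm_num)
  have hsegment : ∀ t ∈ Ioo (1 - d / 4) 1,
      ENNReal.ofReal ((1 / 2) ^ N * (2 * d) ^ (-(p + 1))) ≤ ENNReal.ofReal (t ^ N) *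
        (ball 0 1).indicator (fun y => ENNReal.ofReal (‖y - x‖ ^ (-(p + 1)))) (t • θ) := by
    intro t ht
    have ht2 : 1 / 2 ≤ t := by linarith [ht.1]
    have ht0 : 0 ≤ t := by linarith
    have hball : t • θ ∈ ball (0 : E) 1 := by
      rw [mem_ball_zero_iff, norm_smul, hθ, mul_one, Real.norm_of_nonneg ht0]
      exact ht.2
    have hpos : 0 < ‖t • θ - x‖ :=
      (abs_pos.2 (sub_ne_zero.2 ht.2.ne)).trans_le (abs_sub_one_le_norm_smul_sub hx hθ ht0)
    have hle : ‖t • θ - x‖ ≤ 2 * d := by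
      have hradial : ‖t • θ - θ‖ = 1 - t := by
        rw [show t • θ - θ = (t - 1) • θ by rw [sub_smul, one_smul], norm_smul, hθ, mul_one,
          Real.norm_eq_abs, abs_sub_comm, abs_of_pos (by linarith [ht.2])]
      linarith [norm_sub_le_norm_sub_add_norm_sub (t • θ) θ x, ht.1]
    rw [indicator_of_mem hball, ← ENNReal.ofReal_mul (by positivity)]
    have := Real.rpow_le_rpow_of_nonpos hpos hle (by linarith : -(p + 1) ≤ 0)
    gcongr
  calc ENNReal.ofReal (d ^ (-p))
      = ENNReal.ofReal (4 * 2 ^ (p + 1) * 2 ^ N) * ∫⁻ _ in Ioo (1 - d / 4) 1,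
          ENNReal.ofReal ((1 / 2) ^ N * (2 * d) ^ (-(p + 1))) := by
        rw [setLIntegral_const, Real.volume_Ioo, ← ENNReal.ofReal_mul (by positivity),
          ← ENNReal.ofReal_mul (by positivity), Real.mul_rpow (by positivity) hd0.le,
          Real.rpow_neg zero_le_two, Real.rpow_neg hd0.le (p + 1), Real.rpow_add_one hd0.ne',
          Real.rpow_neg hd0.le, div_pow, sub_sub_cancel]
        congr 1
        field_simp
        simp
    _ ≤ ENNReal.ofReal (4 * 2 ^ (p + 1) * 2 ^ N) * ∫⁻ t in Ioo (1 - d / 4) 1,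
          ENNReal.ofReal (t ^ N) *
            (ball 0 1).indicator (fun y => ENNReal.ofReal (‖y - x‖ ^ (-(p + 1)))) (t • θ) := by
        exact mul_le_mul_right (setLIntegral_mono' measurableSet_Ioo hsegment) _
    _ ≤ _ := by
        gcongr
        exact fun t ht => show (0 : ℝ) < t by linarith [ht.1]

theorem exists_lintegral_toSphere_norm_sub_rpow_le {p : ℝ} (hp : 0 ≤ p)
    (hpE : p < (finrank ℝ E : ℝ) - 1) :
    ∃ C : NNReal, ∀ x : sphere (0 : E) 1,
      ∫⁻ θ : sphere (0 : E) 1, ENNReal.ofReal (‖(θ : E) - x‖ ^ (-p)) ∂μ.toSphere ≤ C := by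
  rcases hp.eq_or_lt with rfl | hp
  · refine ⟨(μ.toSphere univ).toNNReal, fun x => ?_⟩
    rw [ENNReal.coe_toNNReal (measure_ne_top μ.toSphere univ)]
    simp
  obtain ⟨C, hC⟩ := exists_lintegral_ball_norm_sub_rpow_le μ (s := p + 1) (by linarith)
  set N := finrank ℝ E - 1
  refine ⟨(4 * 2 ^ (p + 1) * 2 ^ N : ℝ).toNNReal * C, fun x => ?_⟩
  have hx : ‖(x : E)‖ = 1 := norm_eq_of_mem_sphere x
  set F : E → ℝ≥0∞ :=
    (ball 0 1).indicator fun y => ENNReal.ofReal (‖y - (x : E)‖ ^ (-(p + 1)))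
  have hF : Measurable F := Measurable.indicator (by fun_prop) measurableSet_ball
  have hpoint (θ : sphere (0 : E) 1) : ENNReal.ofReal (‖(θ : E) - x‖ ^ (-p)) ≤
      ENNReal.ofReal (4 * 2 ^ (p + 1) * 2 ^ N) *
        ∫⁻ t in Ioi (0 : ℝ), ENNReal.ofReal (t ^ N) * F (t • (θ : E)) := by
    by_cases hθ : (θ : E) = x
    · simp [hθ, Real.zero_rpow (neg_ne_zero.2 hp.ne')]
    · exact ofReal_norm_sub_rpow_le_lintegral N hp.le hx (norm_eq_of_mem_sphere θ) hθ
  calc ∫⁻ θ : sphere (0 : E) 1, ENNReal.ofReal (‖(θ : E) - x‖ ^ (-p)) ∂μ.toSphere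
      ≤ ∫⁻ θ : sphere (0 : E) 1, ENNReal.ofReal (4 * 2 ^ (p + 1) * 2 ^ N) *
          (∫⁻ t in Ioi (0 : ℝ), ENNReal.ofReal (t ^ N) * F (t • (θ : E))) ∂μ.toSphere :=
        lintegral_mono hpoint
    _ = ENNReal.ofReal (4 * 2 ^ (p + 1) * 2 ^ N) * ∫⁻ y in ball 0 1,
          ENNReal.ofReal (‖y - (x : E)‖ ^ (-(p + 1))) ∂μ := by
        rw [lintegral_const_mul' _ _ ENNReal.ofReal_ne_top, lintegral_lintegral_swap
          (by fun_prop), ← lintegral_indicator measurableSet_ball,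
          lintegral_eq_lintegral_toSphere μ hF]
        simp_rw [lintegral_const_mul' _ _ ENNReal.ofReal_ne_top]
        rfl
    _ ≤ _ := by
        rw [ENNReal.coe_mul]
        exact mul_le_mul_right (hC x hx.le) _

omit [FiniteDimensional ℝ E] [MeasurableSpace E] [BorelSpace E] in
theorem exists_mem_sphere_mul_norm_sub_le (x : E) :
    ∃ x' : sphere (0 : E) 1, ∀ t : ℝ, 0 < t → ∀ θ : sphere (0 : E) 1,
      t * ‖(θ : E) - x'‖ ≤ 2 * ‖x - t • (θ : E)‖ := by
  rcases eq_or_ne x 0 with rfl | hx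
  · obtain ⟨x', hx'⟩ := (NormedSpace.sphere_nonempty (x := (0 : E))).2 zero_le_one
    refine ⟨⟨x', hx'⟩, fun t ht θ => ?_⟩
    rw [zero_sub, norm_neg, norm_smul, norm_eq_of_mem_sphere, Real.norm_of_nonneg ht.le]
    have : ‖(θ : E) - x'‖ ≤ 1 + 1 := (norm_sub_le _ _).trans
      (add_le_add (norm_eq_of_mem_sphere θ).le (norm_eq_of_mem_sphere ⟨x', hx'⟩).le)
    nlinarith
  · have : 0 < ‖x‖ := norm_pos_iff.2 hx
    have hunit : ‖‖x‖⁻¹ • x‖ = 1 := norm_smul_inv_norm (𝕜 := ℝ) hx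
    refine ⟨⟨‖x‖⁻¹ • x, mem_sphere_zero_iff_norm.2 hunit⟩, fun t ht θ => ?_⟩
    have h := norm_sub_le_two_mul_norm_smul_sub (norm_eq_of_mem_sphere θ) hunit
      (t := ‖x‖ / t) (by positivity)
    have hscale : x - t • (θ : E) = t • ((‖x‖ / t) • ‖x‖⁻¹ • x - (θ : E)) := by
      rw [smul_sub, smul_smul, smul_smul]
      field_simp
      simp
    calc t * ‖(θ : E) - ‖x‖⁻¹ • x‖ = t * ‖‖x‖⁻¹ • x - (θ : E)‖ := by rw [norm_sub_rev]
      _ ≤ t * (2 * ‖(‖x‖ / t) • ‖x‖⁻¹ • x - (θ : E)‖) := by gcongr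
      _ = 2 * ‖x - t • (θ : E)‖ := by
        rw [hscale, norm_smul, Real.norm_of_nonneg ht.le]
        ring

omit [Nontrivial E] in
open scoped Pointwise in
theorem nullSingletonClass_toSphere (h : 1 < finrank ℝ E) : NullSingletonClass μ.toSphere where
  measure_singleton x := by
    have hcone : Ioo (0 : ℝ) 1 • ((↑) '' {x} : Set E) ⊆
        (Submodule.span ℝ {(x : E)} : Set E) := by
      rw [image_singleton, smul_singleton]
      rintro _ ⟨t, -, rfl⟩
      exact Submodule.smul_mem _ t (Submodule.mem_span_singleton_self _)
    have hspan : Submodule.span ℝ {(x : E)} ≠ ⊤ := fun htop => by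
      have hx := finrank_span_singleton (K := ℝ) (ne_zero_of_mem_unit_sphere x)
      rw [htop, finrank_top] at hx
      exact h.ne' hx
    rw [μ.toSphere_apply' (measurableSet_singleton x),
      measure_mono_null hcone (μ.addHaar_submodule _ hspan), mul_zero]

end SphericalWeight

end Polar

section JapaneseBracket

variable {n : ℕ}

theorem jap_pos (x : Euc n) : 0 < jap x := Real.sqrt_pos.2 (by positivity)

theorem one_le_jap (x : Euc n) : 1 ≤ jap x := by
  rw [jap, Real.one_le_sqrt]
  linarith [sq_nonneg ‖x‖]

theorem norm_le_jap (x : Euc n) : ‖x‖ ≤ jap x :=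
  Real.le_sqrt_of_sq_le (by linarith)

@[fun_prop]
theorem continuous_jap : Continuous (jap : Euc n → ℝ) := by
  unfold jap
  fun_prop

@[fun_prop]
theorem measurable_jap : Measurable (jap : Euc n → ℝ) := continuous_jap.measurable

theorem pow_mul_jap_rpow_le {m : ℕ} {p : ℝ} (hp : 0 ≤ p) (hpm : p ≤ m) {t R d : ℝ} (ht : 0 < t)
    (htR : t ≤ R) (hd : 0 < d) {z : Euc n} (hz : t * d ≤ 2 * ‖z‖) :
    t ^ m * jap z ^ (-p) ≤ 2 ^ p * R ^ (m - p) * d ^ (-p) := by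
  have hjap : jap z ^ (-p) ≤ 2 ^ p * t ^ (-p) * d ^ (-p) := by
    have hle : t / 2 * d ≤ jap z := le_trans (by linarith) (norm_le_jap z)
    refine (Real.rpow_le_rpow_of_nonpos (by positivity) hle (neg_nonpos.2 hp)).trans_eq ?_
    rw [Real.mul_rpow (by positivity) hd.le, Real.div_rpow ht.le zero_le_two,
      Real.rpow_neg zero_le_two, div_inv_eq_mul, mul_comm (t ^ (-p))]
  have hpow : t ^ m * t ^ (-p) ≤ R ^ (m - p) := by
    rw [← Real.rpow_natCast, ← Real.rpow_add ht, ← sub_eq_add_neg]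
    exact Real.rpow_le_rpow ht.le htR (by linarith)
  calc t ^ m * jap z ^ (-p) ≤ t ^ m * (2 ^ p * t ^ (-p) * d ^ (-p)) := by gcongr
    _ = 2 ^ p * (t ^ m * t ^ (-p)) * d ^ (-p) := by ring
    _ ≤ _ := by gcongr

theorem ofReal_pow_mul_indicator_jap_rpow_le {m : ℕ} {p : ℝ} (hp : 0 ≤ p) (hpm : p ≤ m) {t ρ d : ℝ}
    (ht : 0 < t) {θ x : Euc n} (hθ : ‖θ‖ = 1) (hd : 0 < d) (hz : t * d ≤ 2 * ‖x - t • θ‖) :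
    ENNReal.ofReal (t ^ m) *
        (unitAnnulus n ρ).indicator (fun y => ENNReal.ofReal (jap (x - y) ^ (-p))) (t • θ) ≤
      (Icc ρ (ρ + 1)).indicator (fun _ => ENNReal.ofReal (2 ^ p * (1 + ρ) ^ (m - p))) t *
        ENNReal.ofReal (d ^ (-p)) := by
  have hmem : t • θ ∈ unitAnnulus n ρ ↔ t ∈ Icc ρ (ρ + 1) := by
    rw [unitAnnulus, mem_ofPred_eq, norm_smul, hθ, mul_one, Real.norm_of_nonneg ht.le]
  by_cases htρ : t ∈ Icc ρ (ρ + 1)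
  · have : 0 < 1 + ρ := by linarith [htρ.2]
    rw [indicator_of_mem (hmem.2 htρ), indicator_of_mem htρ, ← ENNReal.ofReal_mul (by positivity),
      ← ENNReal.ofReal_mul (by positivity)]
    exact ENNReal.ofReal_le_ofReal
      (pow_mul_jap_rpow_le hp hpm ht (htρ.2.trans_eq (add_comm _ _)) hd hz)
  · rw [indicator_of_notMem (fun h => htρ (hmem.1 h)), mul_zero]
    exact zero_le

open Metric Measure Module in
theorem exists_lintegral_unitAnnulus_jap_rpow_le {m : ℕ} {p : ℝ} (hp : 0 ≤ p) (hpm : p < m) :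
    ∃ C : NNReal, ∀ (ρ : ℝ) (x : Euc (m + 1)),
      ∫⁻ y in unitAnnulus (m + 1) ρ, ENNReal.ofReal (jap (x - y) ^ (-p)) ≤
        C * ENNReal.ofReal ((1 + ρ) ^ (m - p)) := by
  have hdim : finrank ℝ (Euc (m + 1)) = m + 1 := finrank_euclideanSpace_fin
  set τ := (volume : Measure (Euc (m + 1))).toSphere
  have : NullSingletonClass τ := nullSingletonClass_toSphere volume (by
    rw [hdim]
    have : (0 : ℝ) < m := hp.trans_lt hpm
    exact Nat.succ_lt_succ (Nat.cast_pos.1 this))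
  obtain ⟨C, hC⟩ := exists_lintegral_toSphere_norm_sub_rpow_le (volume : Measure (Euc (m + 1))) hp
    (by rw [hdim]; push_cast; linarith)
  refine ⟨(2 ^ p : ℝ).toNNReal * C, fun ρ x => ?_⟩
  obtain ⟨x', hx'⟩ := exists_mem_sphere_mul_norm_sub_le x
  set G : Euc (m + 1) → ℝ≥0∞ :=
    (unitAnnulus (m + 1) ρ).indicator fun y => ENNReal.ofReal (jap (x - y) ^ (-p))
  have hG : Measurable G := Measurable.indicator (by fun_prop) (measurableSet_unitAnnulus _ ρ)
  calc ∫⁻ y in unitAnnulus (m + 1) ρ, ENNReal.ofReal (jap (x - y) ^ (-p))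
      = ∫⁻ t in Ioi (0 : ℝ),
          ENNReal.ofReal (t ^ m) * ∫⁻ θ, G (t • (θ : Euc (m + 1))) ∂τ := by
        rw [← lintegral_indicator (measurableSet_unitAnnulus _ ρ),
          lintegral_eq_lintegral_toSphere volume hG, hdim, Nat.add_sub_cancel]
    _ ≤ ∫⁻ t in Ioi (0 : ℝ), (Icc ρ (ρ + 1)).indicator
          (fun _ => ENNReal.ofReal (2 ^ p * (1 + ρ) ^ (m - p))) t * C := by
        refine setLIntegral_mono' measurableSet_Ioi fun t ht => ?_
        rw [← lintegral_const_mul' _ _ ENNReal.ofReal_ne_top]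
        refine (lintegral_mono_ae ?_).trans
          ((lintegral_const_mul _ (by fun_prop)).trans_le (mul_le_mul_right (hC x') _))
        filter_upwards [Measure.ae_ne τ x'] with θ hθ using
          ofReal_pow_mul_indicator_jap_rpow_le hp hpm.le ht (norm_eq_of_mem_sphere θ)
            (norm_pos_iff.2 (sub_ne_zero.2 fun h => hθ (Subtype.ext h))) (hx' t ht θ)
    _ ≤ ∫⁻ t, (Icc ρ (ρ + 1)).indicator
          (fun _ => ENNReal.ofReal (2 ^ p * (1 + ρ) ^ (m - p))) t * C :=
        setLIntegral_le_lintegral _ _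
    _ = _ := by
        rw [lintegral_mul_const' _ _ ENNReal.coe_ne_top,
          lintegral_indicator_const measurableSet_Icc, Real.volume_Icc,
          ENNReal.ofReal_mul (by positivity), ENNReal.coe_mul, add_sub_cancel_left,
          ENNReal.ofReal_one, mul_one, mul_right_comm]
        rfl

end JapaneseBracket

/-! ### Derivatives in the radii -/

section EwaldSphere

open Metric Measure

open scoped Pointwise in
theorem restrict_sphere_hausdorffMeasure {E : Type*} [NormedAddCommGroup E] [NormedSpace ℝ E]
    [MeasurableSpace E] [BorelSpace E] {d : ℝ} (hd : 0 ≤ d) (c : E) {ρ : ℝ} (hρ : 0 < ρ) :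
    μH[d].restrict (sphere c ρ) =
      ENNReal.ofReal (ρ ^ d) • (μH[d].restrict (sphere 0 1)).map fun θ : E => c + ρ • θ := by
  have hT : Measurable fun θ : E => c + ρ • θ := by fun_prop
  ext A hA
  have himage : A ∩ sphere c ρ = IsometryEquiv.addLeft c ''
      (ρ • ((fun θ : E => c + ρ • θ) ⁻¹' A ∩ sphere 0 1)) := by
    ext x
    constructor
    · rintro ⟨hxA, hx⟩
      refine ⟨x - c, ⟨ρ⁻¹ • (x - c), ⟨?_, ?_⟩, smul_inv_smul₀ hρ.ne' _⟩, add_sub_cancel c x⟩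
      · rwa [mem_preimage, smul_inv_smul₀ hρ.ne', add_sub_cancel]
      · rw [mem_sphere_zero_iff_norm, norm_smul, mem_sphere_iff_norm.1 hx, norm_inv,
          Real.norm_of_nonneg hρ.le, inv_mul_cancel₀ hρ.ne']
    · rintro ⟨y, ⟨θ, ⟨hθA, hθ⟩, rfl⟩, rfl⟩
      refine ⟨hθA, ?_⟩
      rw [mem_sphere_zero_iff_norm] at hθ
      simp [norm_smul, hθ, abs_of_pos hρ]
  rw [Measure.restrict_apply hA, Measure.smul_apply, Measure.map_apply hT hA,
    Measure.restrict_apply (hT hA), himage, IsometryEquiv.hausdorffMeasure_image,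
    hausdorffMeasure_smul₀ hd hρ.ne', ENNReal.smul_def, smul_eq_mul, smul_eq_mul,
    ENNReal.ofReal_rpow_of_pos hρ |>.symm, ENNReal.coe_rpow_of_nonneg _ hd,
    ← enorm_eq_nnnorm, Real.enorm_of_nonneg hρ.le]

theorem pi_smul_measure {ι : Type*} [Fintype ι] {X : ι → Type*} [∀ i, MeasurableSpace (X i)]
    (μ : ∀ i, Measure (X i)) [∀ i, SigmaFinite (μ i)] (c : ι → NNReal) :
    Measure.pi (fun i => c i • μ i) = (∏ i, c i) • Measure.pi μ := by
  refine Measure.pi_eq fun s _ => ?_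
  simp_rw [Measure.smul_apply, Measure.pi_pi, ENNReal.smul_def, smul_eq_mul,
    ENNReal.ofNNReal_finsetProd, Finset.prod_mul_distrib]

variable {n m k : ℕ}

/-- The hypersurface measure of a product of `k` unit spheres. -/
def sphereMeasurePi (n k : ℕ) : Measure (Fin k → Euc n) :=
  Measure.pi fun _ => sphereMeasure n

instance : IsFiniteMeasure (sphereMeasurePi (m + 1) k) := by
  unfold sphereMeasurePi
  infer_instance

theorem ae_norm_eq_one_sphereMeasurePi : ∀ᵐ θ ∂(sphereMeasurePi (m + 1) k), ∀ i, ‖θ i‖ = 1 := by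
  have : SigmaFinite (sphereMeasure (m + 1)) := inferInstance
  have hsphere : ∀ᵐ x ∂(sphereMeasure (m + 1)), ‖x‖ = 1 := by
    filter_upwards [ae_restrict_mem isClosed_sphere.measurableSet] with x hx
    exact mem_sphere_zero_iff_norm.1 hx
  exact ae_all_iff.2 fun i =>
    (tendsto_eval_ae_ae (μ := fun _ => sphereMeasure (m + 1)) (i := i)).eventually hsphere

/-- Polar coordinates `ξᵢ = η/2 + rᵢ (|η|/2) θᵢ` on the Ewald spheres `Γ_{rᵢ}(η)`. -/
def ewaldPoint (η : Euc n) (r : Fin k → ℝ) (θ : Fin k → Euc n) (i : Fin k) : Euc n :=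
  (2 : ℝ)⁻¹ • η + (r i * (‖η‖ / 2)) • θ i

theorem pi_ewaldM_eq {η : Euc (m + 1)} (hη : η ≠ 0) {r : Fin k → ℝ} (hr : ∀ i, 0 < r i) :
    Measure.pi (fun i => ewaldM (m + 1) (r i) η) =
      (∏ i, ((r i * (‖η‖ / 2)) ^ m).toNNReal) •
        (sphereMeasurePi (m + 1) k).map (ewaldPoint η r) := by
  have hη0 : 0 < ‖η‖ := norm_pos_iff.2 hη
  have hewald (i : Fin k) : ewaldM (m + 1) (r i) η = ((r i * (‖η‖ / 2)) ^ m).toNNReal •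
      (sphereMeasure (m + 1)).map (fun θ => (2 : ℝ)⁻¹ • η + (r i * (‖η‖ / 2)) • θ) := by
    have hρ : 0 < r i * (‖η‖ / 2) := mul_pos (hr i) (half_pos hη0)
    rw [ewaldM, mul_div_assoc, restrict_sphere_hausdorffMeasure (by simp) _ hρ,
      sphereMeasure, Nat.cast_succ, add_sub_cancel_right, Real.rpow_natCast]
    rfl
  simp only [hewald]
  rw [pi_smul_measure, sphereMeasurePi, ← pi_map_pi fun i => by fun_prop]
  rfl

/-- The factor of `S_{k+1,𝐫}` carried by each Ewald sphere `Γ_r`: the normalisation `2 / (1 + r)`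
and the Jacobian `r^m` of polar coordinates. -/
def ewaldFactor (m : ℕ) (r : ℝ) : ℝ :=
  2 / (1 + r) * r ^ m

@[fun_prop]
theorem continuous_chainDiff (η : Euc n) (i : Fin (k + 1)) :
    Continuous fun ξ : Fin k → Euc n => chainDiff k η ξ i := by
  unfold chainDiff
  refine Continuous.sub ?_ ?_ <;> split_ifs <;> fun_prop

theorem Sj_eq_smul_integral_sphereMeasurePi {q : Euc (m + 1) → ℂ} (hq : Continuous (ft q))
    {η : Euc (m + 1)} (hη : η ≠ 0) {r : Fin k → ℝ} (hr : ∀ i, 0 < r i) :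
    Sj k r q η =
      ((∏ i, ewaldFactor m (r i)) * (‖η‖ ^ (-(k : ℝ)) * ((‖η‖ / 2) ^ m) ^ k)) •
        ∫ θ, ∏ i, ft q (chainDiff k η (ewaldPoint η r θ) i) ∂(sphereMeasurePi (m + 1) k) := by
  have hpoint : Measurable (ewaldPoint η r) := by unfold ewaldPoint; fun_prop
  have hcont : Continuous fun ξ : Fin k → Euc (m + 1) => ∏ i, ft q (chainDiff k η ξ i) := by
    fun_prop
  rw [Sj, pi_ewaldM_eq hη hr, integral_smul_nnreal_measure, integral_map hpoint.aemeasurable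
    hcont.aestronglyMeasurable, NNReal.smul_def, smul_smul]
  congr 1
  have hscale (i : Fin k) : (((r i * (‖η‖ / 2)) ^ m).toNNReal : ℝ) = r i ^ m * (‖η‖ / 2) ^ m := by
    have := hr i
    rw [Real.coe_toNNReal _ (by positivity), mul_pow]
  simp only [NNReal.coe_prod, hscale, ewaldFactor, Finset.prod_mul_distrib, Finset.prod_const,
    Finset.card_univ, Fintype.card_fin]
  ring

/-- Cutting off outside the support of `μ` makes the integral a convolution evaluated at `0`. -/
theorem contDiff_integral_of_ae_norm_le {P G F : Type*} [NormedAddCommGroup P] [NormedSpace ℝ P]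
    [NormedAddCommGroup G] [NormedSpace ℝ G] [FiniteDimensional ℝ G] [MeasurableSpace G]
    [BorelSpace G] [NormedAddCommGroup F] [NormedSpace ℝ F] {μ : Measure G}
    [IsFiniteMeasure μ] {f : P → G → F} {N : ℕ∞} (hf : ContDiff ℝ N fun p : P × G => f p.1 p.2)
    {R : ℝ} (hR : 0 < R) (hμ : ∀ᵐ x ∂μ, ‖x‖ ≤ R) : ContDiff ℝ N fun p => ∫ x, f p x ∂μ := by
  let φ : ContDiffBump (0 : G) := ⟨R, R + 1, hR, lt_add_one R⟩
  have hsmooth : ContDiff ℝ N fun p : P × G => φ p.2 • f p.1 (-p.2) :=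
    (φ.contDiff.comp contDiff_snd).smul (hf.comp (contDiff_fst.prodMk contDiff_snd.neg))
  have hconv := contDiffOn_convolution_right_with_param_comp (n := N) (𝕜 := ℝ) (μ := μ)
    (ContinuousLinearMap.lsmul ℝ ℝ : ℝ →L[ℝ] F →L[ℝ] F) (v := fun _ : P => (0 : G))
    contDiffOn_const (f := fun _ => (1 : ℝ)) (g := fun p x => φ x • f p (-x))
    (k := closedBall 0 (R + 1)) isOpen_univ (isCompact_closedBall _ _) (fun p x _ hx => by
      rw [mem_closedBall, not_le] at hx
      rw [φ.zero_of_le_dist hx.le, zero_smul])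
    (integrable_const _).locallyIntegrable hsmooth.contDiffOn
  rw [contDiffOn_univ] at hconv
  convert hconv using 2 with p
  rw [convolution_def]
  refine integral_congr_ae ?_
  filter_upwards [hμ] with x hx
  have hφ : φ (-x) = 1 := φ.one_of_mem_closedBall (by simpa using hx)
  simp [hφ]

theorem contDiff_chainDiff_ewaldPoint (η : Euc n) (i : Fin (k + 1)) {N : WithTop ℕ∞} :
    ContDiff ℝ N fun p : (Fin k → ℝ) × (Fin k → Euc n) =>
      chainDiff k η (ewaldPoint η p.1 p.2) i := by
  unfold chainDiff ewaldPoint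
  refine ContDiff.sub ?_ ?_ <;> split_ifs <;> fun_prop

theorem contDiffOn_Sj {q : Euc (m + 1) → ℂ} {N : ℕ∞} (hq : ContDiff ℝ N (ft q))
    {η : Euc (m + 1)} (hη : η ≠ 0) :
    ContDiffOn ℝ N (fun r : Fin k → ℝ => Sj k r q η) {r | ∀ i, 0 < r i} := by
  have hint : ContDiff ℝ N fun r : Fin k → ℝ =>
      ∫ θ, ∏ i, ft q (chainDiff k η (ewaldPoint η r θ) i) ∂(sphereMeasurePi (m + 1) k) := by
    refine contDiff_integral_of_ae_norm_le (R := 1) ?_ one_pos ?_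
    · exact contDiff_prod fun i _ => hq.comp (contDiff_chainDiff_ewaldPoint η i)
    · filter_upwards [ae_norm_eq_one_sphereMeasurePi] with θ hθ
      exact (pi_norm_le_iff_of_nonneg zero_le_one).2 fun i => (hθ i).le
  have hfactor : ContDiffOn ℝ N (fun r : Fin k → ℝ =>
      (∏ i, ewaldFactor m (r i)) * (‖η‖ ^ (-(k : ℝ)) * ((‖η‖ / 2) ^ m) ^ k))
      {r | ∀ i, 0 < r i} := by
    refine (contDiffOn_prod fun i _ => ?_).mul contDiffOn_const
    unfold ewaldFactor
    refine (contDiffOn_const.div (by fun_prop) fun r hr => ?_).mul (by fun_prop)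
    have := hr i
    positivity
  exact (hfactor.smul hint.contDiffOn).congr fun r hr =>
    Sj_eq_smul_integral_sphereMeasurePi hq.continuous hη hr

end EwaldSphere

section WordDerivative

variable {ι E F : Type*} [NormedAddCommGroup E] [NormedSpace ℝ E] [NormedAddCommGroup F]
  [NormedSpace ℝ F]

/-- The iterated derivative `∂_{θ_{w 0}} ∂_{θ_{w 1}} ⋯ f` along the directions spelled by the word
`w`. -/
def wordDeriv (f : E → F) (w : List ι) (θ : ι → E) (x : E) : F :=
  iteratedFDeriv ℝ w.length f x fun i => θ (w.get i)

theorem continuous_wordDeriv {f : E → F} (hf : ContDiff ℝ (⊤ : ℕ∞) f) (w : List ι) :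
    Continuous fun p : (ι → E) × E => wordDeriv f w p.1 p.2 := by
  have hD : Continuous (iteratedFDeriv ℝ w.length f) :=
    hf.continuous_iteratedFDeriv (mod_cast le_top)
  exact (hD.comp continuous_snd).eval (by fun_prop)

theorem norm_wordDeriv_le (f : E → F) (w : List ι) {θ : ι → E} (hθ : ∀ j, ‖θ j‖ ≤ 1) (x : E) :
    ‖wordDeriv f w θ x‖ ≤ ‖iteratedFDeriv ℝ w.length f x‖ :=
  (ContinuousMultilinearMap.le_opNorm _ _).trans <| mul_le_of_le_one_right (norm_nonneg _) <|
    Finset.prod_le_one (fun _ _ => norm_nonneg _) fun _ _ => hθ _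

theorem hasDerivAt_wordDeriv_comp {f : E → F} (hf : ContDiff ℝ (⊤ : ℕ∞) f) (w : List ι)
    (θ : ι → E) (j : ι) {γ : ℝ → E} {c t : ℝ} (hγ : HasDerivAt γ (c • θ j) t) :
    HasDerivAt (fun s => wordDeriv f w θ (γ s)) (c • wordDeriv f (j :: w) θ (γ t)) t := by
  have hD : DifferentiableAt ℝ (iteratedFDeriv ℝ w.length f) (γ t) :=
    hf.differentiable_iteratedFDeriv (mod_cast ENat.natCast_lt_top _) _
  have hcomp := ((ContinuousMultilinearMap.apply ℝ (fun _ : Fin w.length => E) F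
    fun i => θ (w.get i)).hasFDerivAt.comp _ hD.hasFDerivAt).comp_hasDerivAt t hγ
  rw [map_smul] at hcomp
  exact hcomp

end WordDerivative

section ChainProduct

variable {n m k : ℕ}

/-- The coefficient of `ξⱼ` in the `i`-th difference of the chain. -/
def chainCoeff (i : Fin (k + 1)) (j : Fin k) : ℝ :=
  (if i = j.succ then 1 else 0) - (if i = j.castSucc then 1 else 0)

theorem chainDiff_eq_add_sum (η : Euc n) (ξ : Fin k → Euc n) (i : Fin (k + 1)) :
    chainDiff k η ξ i = (if i = 0 then η else 0) + ∑ j, chainCoeff i j • ξ j := by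
  have hpred : (if h : (i : ℕ) = 0 then η else ξ ⟨(i : ℕ) - 1, by have := i.isLt; omega⟩) =
      (if i = 0 then η else 0) + ∑ j : Fin k, (if i = j.succ then (1 : ℝ) else 0) • ξ j := by
    refine Fin.cases ?_ (fun l => ?_) i
    · simp [(Fin.succ_ne_zero _).symm]
    · simp [Fin.succ_ne_zero]
  have hsucc : (if h : (i : ℕ) < k then ξ ⟨(i : ℕ), h⟩ else 0) =
      ∑ j : Fin k, (if i = j.castSucc then (1 : ℝ) else 0) • ξ j := by
    refine Fin.lastCases ?_ (fun l => ?_) i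
    · simp [(Fin.castSucc_ne_last _).symm]
    · simp
  rw [chainDiff, hpred, hsucc, add_sub_assoc, ← Finset.sum_sub_distrib]
  simp only [chainCoeff, sub_smul]

theorem hasDerivAt_chainDiff_update (η c : Euc n) (θ : Fin k → Euc n) (ρ : Fin k → ℝ) (j : Fin k)
    (i : Fin (k + 1)) :
    HasDerivAt (fun t => chainDiff k η (fun l => c + Function.update ρ j t l • θ l) i)
      (chainCoeff i j • θ j) (ρ j) := by
  simp only [chainDiff_eq_add_sum]
  have hterm : ∀ l ∈ (Finset.univ : Finset (Fin k)),
      HasDerivAt (fun t => chainCoeff i l • (c + Function.update ρ j t l • θ l))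
        (if l = j then chainCoeff i j • θ j else 0) (ρ j) := by
    intro l _
    by_cases hl : l = j
    · subst hl
      simp only [Function.update_self, if_true]
      have := (((hasDerivAt_id (ρ l)).smul_const (θ l)).const_add c).const_smul (chainCoeff i l)
      exact this.congr_deriv (by simp)
    · simp only [Function.update_of_ne hl, hl, if_false]
      exact hasDerivAt_const _ _
  simpa using (HasDerivAt.fun_sum hterm).const_add (if i = 0 then η else 0)

/-- The product along the chain `ξⱼ = c + ρⱼ θⱼ` of the derivatives of `f` prescribed by the
words `w i`. -/
def chainProd (f : Euc n → ℂ) (η c : Euc n) (w : Fin (k + 1) → List (Fin k)) (θ : Fin k → Euc n)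
    (ρ : Fin k → ℝ) : ℂ :=
  ∏ i, wordDeriv f (w i) θ (chainDiff k η (fun j => c + ρ j • θ j) i)

/-- One more derivative in the direction `θⱼ` on the `i`-th factor of the chain. -/
def consWord (w : Fin (k + 1) → List (Fin k)) (i : Fin (k + 1)) (j : Fin k) :
    Fin (k + 1) → List (Fin k) :=
  Function.update w i (j :: w i)

theorem prod_wordDeriv_consWord (f : Euc n → ℂ) (w : Fin (k + 1) → List (Fin k)) (i : Fin (k + 1))
    (j : Fin k) (θ : Fin k → Euc n) (z : Fin (k + 1) → Euc n) :
    ∏ l, wordDeriv f (consWord w i j l) θ (z l) =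
      (∏ l ∈ Finset.univ.erase i, wordDeriv f (w l) θ (z l)) * wordDeriv f (j :: w i) θ (z i) := by
  rw [← Finset.prod_erase_mul Finset.univ _ (Finset.mem_univ i), consWord, Function.update_self]
  congr 1
  exact Finset.prod_congr rfl fun l hl => by rw [Function.update_of_ne (Finset.ne_of_mem_erase hl)]

theorem continuous_chainProd {f : Euc n → ℂ} (hf : ContDiff ℝ (⊤ : ℕ∞) f) (η c : Euc n)
    (w : Fin (k + 1) → List (Fin k)) :
    Continuous fun p : (Fin k → Euc n) × (Fin k → ℝ) => chainProd f η c w p.1 p.2 := by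
  unfold chainProd
  have hpoint : Continuous fun (p : (Fin k → Euc n) × (Fin k → ℝ)) j => c + p.2 j • p.1 j := by
    fun_prop
  exact continuous_finsetProd _ fun i _ => (continuous_wordDeriv hf (w i)).comp
    (continuous_fst.prodMk ((continuous_chainDiff η i).comp hpoint))

theorem hasDerivAt_chainProd_update {f : Euc n → ℂ} (hf : ContDiff ℝ (⊤ : ℕ∞) f) (η c : Euc n)
    (w : Fin (k + 1) → List (Fin k)) (θ : Fin k → Euc n) (ρ : Fin k → ℝ) (j : Fin k) :
    HasDerivAt (fun t => chainProd f η c w θ (Function.update ρ j t))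
      (chainProd f η c (consWord w j.succ j) θ ρ -
        chainProd f η c (consWord w j.castSucc j) θ ρ) (ρ j) := by
  set z : Fin (k + 1) → Euc n := chainDiff k η fun l => c + ρ l • θ l with hz
  have hfactor : ∀ i ∈ (Finset.univ : Finset (Fin (k + 1))), HasDerivAt
      (fun t => wordDeriv f (w i) θ
        (chainDiff k η (fun l => c + Function.update ρ j t l • θ l) i))
      (chainCoeff i j • wordDeriv f (j :: w i) θ (z i)) (ρ j) := fun i _ => by
    simpa using hasDerivAt_wordDeriv_comp hf (w i) θ j (hasDerivAt_chainDiff_update η c θ ρ j i)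
  have hterm (i : Fin (k + 1)) : (∏ l ∈ Finset.univ.erase i, wordDeriv f (w l) θ (z l)) •
      chainCoeff i j • wordDeriv f (j :: w i) θ (z i) =
      (if i = j.succ then chainProd f η c (consWord w i j) θ ρ else 0) -
        (if i = j.castSucc then chainProd f η c (consWord w i j) θ ρ else 0) := by
    rw [chainProd, prod_wordDeriv_consWord, chainCoeff, hz]
    split_ifs <;> simp
  refine (HasDerivAt.fun_finsetProd hfactor).congr_deriv ?_
  simp only [Function.update_eq_self, ← hz, hterm, Finset.sum_sub_distrib, Finset.sum_ite_eq',
    Finset.mem_univ, if_true]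

/-- The number of variables in `J` on which the `i`-th difference of the chain depends. -/
def chainIncidence (J : Finset (Fin k)) (i : Fin (k + 1)) : ℕ :=
  {j ∈ J | i = j.succ ∨ i = j.castSucc}.card

theorem chainIncidence_le_two (J : Finset (Fin k)) (i : Fin (k + 1)) : chainIncidence J i ≤ 2 := by
  have hsub : Finset.map Fin.valEmbedding {j ∈ J | i = j.succ ∨ i = j.castSucc} ⊆
      {(i : ℕ) - 1, (i : ℕ)} := by
    intro x hx
    simp only [Finset.mem_map, Finset.mem_filter] at hx
    obtain ⟨j, ⟨-, rfl | rfl⟩, rfl⟩ := hx <;> simp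
  rw [chainIncidence, ← Finset.card_map Fin.valEmbedding]
  exact (Finset.card_le_card hsub).trans Finset.card_le_two

theorem chainIncidence_le_insert (J : Finset (Fin k)) (j : Fin k) (i : Fin (k + 1)) :
    chainIncidence J i ≤ chainIncidence (insert j J) i :=
  Finset.card_le_card (Finset.filter_subset_filter _ (Finset.subset_insert _ _))

theorem length_consWord_add_chainIncidence_le (w : Fin (k + 1) → List (Fin k)) {J : Finset (Fin k)}
    {j : Fin k} (hj : j ∉ J) {i : Fin (k + 1)} (hi : i = j.succ ∨ i = j.castSucc)
    (l : Fin (k + 1)) :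
    (consWord w i j l).length + chainIncidence J l ≤
      (w l).length + chainIncidence (insert j J) l := by
  by_cases hl : l = i
  · subst hl
    have hinsert : chainIncidence (insert j J) l = chainIncidence J l + 1 := by
      rw [chainIncidence, Finset.filter_insert, if_pos hi,
        Finset.card_insert_of_notMem (by simp [hj]), chainIncidence]
    rw [consWord, Function.update_self, List.length_cons, hinsert]
    omega
  · rw [consWord, Function.update_of_ne hl]
    exact Nat.add_le_add_left (chainIncidence_le_insert J j l) _

/-- `f` is smooth, and each of its derivatives is bounded. -/
structure IsBoundedSmooth (f : Euc n → ℂ) : Prop where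
  contDiff : ContDiff ℝ (⊤ : ℕ∞) f
  exists_bound (N : ℕ) : ∃ B, ∀ x, ‖iteratedFDeriv ℝ N f x‖ ≤ B

theorem exists_norm_chainProd_le {f : Euc n → ℂ} (hf : IsBoundedSmooth f) (η c : Euc n)
    (w : Fin (k + 1) → List (Fin k)) :
    ∃ B : ℝ, ∀ θ : Fin k → Euc n, (∀ j, ‖θ j‖ ≤ 1) → ∀ ρ, ‖chainProd f η c w θ ρ‖ ≤ B := by
  choose B hB using hf.exists_bound
  refine ⟨∏ i, B (w i).length, fun θ hθ ρ => ?_⟩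
  rw [chainProd, norm_prod]
  exact Finset.prod_le_prod (fun _ _ => norm_nonneg _) fun i _ =>
    (norm_wordDeriv_le f (w i) hθ _).trans (hB _ _)

/-- The integral of `chainProd` over the Ewald spheres, in the polar coordinates `ewaldPoint`. -/
def chainIntegral (f : Euc n → ℂ) (η : Euc n) (w : Fin (k + 1) → List (Fin k))
    (r : Fin k → ℝ) : ℂ :=
  ∫ θ, chainProd f η ((2 : ℝ)⁻¹ • η) w θ (fun j => r j * (‖η‖ / 2)) ∂(sphereMeasurePi n k)

theorem hasDerivAt_chainProd_update_mul {f : Euc n → ℂ} (hf : ContDiff ℝ (⊤ : ℕ∞) f) (η c : Euc n)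
    (b : ℝ) (w : Fin (k + 1) → List (Fin k)) (θ : Fin k → Euc n) (r : Fin k → ℝ) (j : Fin k) :
    HasDerivAt (fun t => chainProd f η c w θ (fun l => Function.update r j t l * b))
      (b • (chainProd f η c (consWord w j.succ j) θ (fun l => r l * b) -
        chainProd f η c (consWord w j.castSucc j) θ (fun l => r l * b))) (r j) := by
  have hscale (t : ℝ) : (fun l => Function.update r j t l * b) =
      Function.update (fun l => r l * b) j (t * b) := by
    ext l
    obtain rfl | hl := eq_or_ne l j
    · simp
    · simp [Function.update_of_ne hl]
  simp only [hscale]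
  refine HasDerivAt.scomp (r j) (h := fun t => t * b)
    (hasDerivAt_chainProd_update hf η c w θ (fun l => r l * b) j) ?_
  simpa using (hasDerivAt_id (r j)).mul_const b

theorem integrable_chainProd {f : Euc (m + 1) → ℂ} (hf : IsBoundedSmooth f) (η c : Euc (m + 1))
    (w : Fin (k + 1) → List (Fin k)) (ρ : Fin k → ℝ) :
    Integrable (fun θ => chainProd f η c w θ ρ) (sphereMeasurePi (m + 1) k) := by
  obtain ⟨B, hB⟩ := exists_norm_chainProd_le hf η c w
  refine .of_bound ((continuous_chainProd hf.contDiff η c w).comp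
    (by fun_prop : Continuous fun θ => (θ, ρ))).aestronglyMeasurable B ?_
  filter_upwards [ae_norm_eq_one_sphereMeasurePi] with θ hθ
  exact hB θ (fun j => (hθ j).le) ρ

theorem hasDerivAt_chainIntegral_update {f : Euc (m + 1) → ℂ} (hf : IsBoundedSmooth f)
    (η : Euc (m + 1)) (w : Fin (k + 1) → List (Fin k)) (r : Fin k → ℝ) (j : Fin k) :
    HasDerivAt (fun t => chainIntegral f η w (Function.update r j t))
      ((‖η‖ / 2) • (chainIntegral f η (consWord w j.succ j) r -
        chainIntegral f η (consWord w j.castSucc j) r)) (r j) := by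
  set c := (2 : ℝ)⁻¹ • η
  set b := ‖η‖ / 2
  have hint := integrable_chainProd hf η c (k := k)
  obtain ⟨B₁, hB₁⟩ := exists_norm_chainProd_le hf η c (consWord w j.succ j)
  obtain ⟨B₂, hB₂⟩ := exists_norm_chainProd_le hf η c (consWord w j.castSucc j)
  have key := hasDerivAt_integral_of_dominated_loc_of_deriv_le (𝕜 := ℝ)
    (μ := sphereMeasurePi (m + 1) k) (x₀ := r j) (s := univ) (bound := fun _ => ‖b‖ * (B₁ + B₂))
    (F := fun t θ => chainProd f η c w θ (fun l => Function.update r j t l * b))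
    (F' := fun t θ => b •
      (chainProd f η c (consWord w j.succ j) θ (fun l => Function.update r j t l * b) -
        chainProd f η c (consWord w j.castSucc j) θ (fun l => Function.update r j t l * b)))
    univ_mem (Eventually.of_forall fun t => (hint w _).aestronglyMeasurable) (hint _ _)
    (((hint _ _).sub (hint _ _)).smul b).aestronglyMeasurable
    (by
      filter_upwards [ae_norm_eq_one_sphereMeasurePi] with θ hθ t _
      rw [norm_smul]
      gcongr
      exact (norm_sub_le _ _).trans
        (add_le_add (hB₁ θ (fun j => (hθ j).le) _) (hB₂ θ (fun j => (hθ j).le) _)))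
    (integrable_const _)
    (Eventually.of_forall fun θ t _ => by
      simpa using hasDerivAt_chainProd_update_mul hf.contDiff η c b w θ (Function.update r j t) j)
  refine key.2.congr_deriv ?_
  simp only [Function.update_eq_self]
  rw [integral_smul, integral_sub (hint _ _) (hint _ _)]
  rfl

end ChainProduct

section EwaldFactor

variable {m k : ℕ} {r : ℝ}

theorem ewaldFactor_pos (m : ℕ) (hr : 0 < r) : 0 < ewaldFactor m r := by
  unfold ewaldFactor
  positivity

theorem hasDerivAt_ewaldFactor (m : ℕ) (hr : 0 < r) :
    HasDerivAt (ewaldFactor m) ((-(1 / (1 + r)) + m / r) * ewaldFactor m r) r := by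
  have hinv : HasDerivAt (fun t : ℝ => 2 / (1 + t)) (-(2 / (1 + r) ^ 2)) r := by
    refine ((hasDerivAt_const r (2 : ℝ)).div ((hasDerivAt_id r).const_add 1)
      (by simp only [id]; positivity)).congr_deriv ?_
    simp only [id, zero_mul, mul_one, zero_sub, neg_div]
  refine (hinv.mul (hasDerivAt_pow m r)).congr_deriv ?_
  unfold ewaldFactor
  obtain _ | m := m
  · simp; field_simp
  · simp only [Nat.add_sub_cancel, pow_succ]
    field_simp

theorem exists_abs_deriv_ewaldFactor_le (m : ℕ) {δ : ℝ} (hδ : δ < 1) :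
    ∃ K : ℝ, 1 ≤ K ∧ ∀ r, 1 - δ < r → |deriv (ewaldFactor m) r| ≤ K * ewaldFactor m r := by
  have hδ' : 0 < 1 - δ := sub_pos.2 hδ
  refine ⟨1 + m / (1 - δ), le_add_of_nonneg_right (by positivity), fun r hr => ?_⟩
  have hr0 : 0 < r := hδ'.trans hr
  rw [(hasDerivAt_ewaldFactor m hr0).deriv, abs_mul, abs_of_pos (ewaldFactor_pos m hr0)]
  refine mul_le_mul_of_nonneg_right ((abs_add_le _ _).trans ?_) (ewaldFactor_pos m hr0).le
  rw [abs_neg, abs_of_pos (by positivity), abs_of_nonneg (by positivity)]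
  gcongr
  rw [div_le_one (by positivity)]
  linarith

/-- The product of the Ewald factors in which those marked by `e` are differentiated. -/
def ewaldFactorProd (m : ℕ) (e : Fin k → Bool) (r : Fin k → ℝ) : ℝ :=
  ∏ i, if e i then deriv (ewaldFactor m) (r i) else ewaldFactor m (r i)

theorem hasDerivAt_ewaldFactorProd_update (m : ℕ) {e : Fin k → Bool} {r : Fin k → ℝ} {j : Fin k}
    (he : e j = false) (hr : 0 < r j) :
    HasDerivAt (fun t => ewaldFactorProd m e (Function.update r j t))
      (ewaldFactorProd m (Function.update e j true) r) (r j) := by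
  have hleft (t : ℝ) : ewaldFactorProd m e (Function.update r j t) =
      (∏ i ∈ Finset.univ.erase j,
        if e i then deriv (ewaldFactor m) (r i) else ewaldFactor m (r i)) * ewaldFactor m t := by
    rw [ewaldFactorProd, ← Finset.prod_erase_mul Finset.univ _ (Finset.mem_univ j)]
    congr 1
    · refine Finset.prod_congr rfl fun l hl => ?_
      rw [Function.update_of_ne (Finset.ne_of_mem_erase hl)]
    · simp [he]
  have hright : ewaldFactorProd m (Function.update e j true) r =
      (∏ i ∈ Finset.univ.erase j,
        if e i then deriv (ewaldFactor m) (r i) else ewaldFactor m (r i)) *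
          deriv (ewaldFactor m) (r j) := by
    rw [ewaldFactorProd, ← Finset.prod_erase_mul Finset.univ _ (Finset.mem_univ j)]
    congr 1
    · refine Finset.prod_congr rfl fun l hl => ?_
      rw [Function.update_of_ne (Finset.ne_of_mem_erase hl)]
    · simp
  simp only [hleft, hright]
  exact (hasDerivAt_ewaldFactor m hr).differentiableAt.hasDerivAt.const_mul _

theorem abs_ewaldFactorProd_le {m : ℕ} {e : Fin k → Bool} {r : Fin k → ℝ} (hr : ∀ i, 0 < r i)
    {K : ℝ} (hK : 1 ≤ K)
    (he : ∀ i, e i = true → |deriv (ewaldFactor m) (r i)| ≤ K * ewaldFactor m (r i)) :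
    |ewaldFactorProd m e r| ≤ K ^ k * ∏ i, ewaldFactor m (r i) := by
  have hfactor : K ^ k * ∏ i, ewaldFactor m (r i) = ∏ i, K * ewaldFactor m (r i) := by
    rw [Finset.prod_mul_distrib, Finset.prod_const, Finset.card_univ, Fintype.card_fin]
  rw [hfactor, ewaldFactorProd, Finset.abs_prod]
  refine Finset.prod_le_prod (fun _ _ => abs_nonneg _) fun i _ => ?_
  have hpos := ewaldFactor_pos m (hr i)
  split_ifs with hi
  · exact he i hi
  · rw [abs_of_pos hpos]
    exact le_mul_of_one_le_left hpos.le hK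

end EwaldFactor

section LeibnizExpansion

variable {m k : ℕ}

/-- A term of the expansion of `∂_𝐫^𝐚 S_{k+1,𝐫}` by the Leibniz rule: a coefficient, the set of the
Ewald factors that have been differentiated, and the derivatives that have fallen on each `q̂`. -/
structure LeibnizTerm (k : ℕ) where
  coeff : ℝ
  marked : Fin k → Bool
  words : Fin (k + 1) → List (Fin k)

namespace LeibnizTerm

/-- The undifferentiated term with coefficient `κ`. -/
def init (κ : ℝ) : LeibnizTerm k :=
  ⟨κ, fun _ => false, fun _ => []⟩

/-- The function of `r` denoted by a term. -/
def eval (m : ℕ) (f : Euc (m + 1) → ℂ) (η : Euc (m + 1)) (r : Fin k → ℝ) (T : LeibnizTerm k) : ℂ :=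
  ((T.coeff * ewaldFactorProd m T.marked r : ℝ) : ℂ) * chainIntegral f η T.words r

/-- The three terms of the derivative in `r j` of a term in which the `j`-th Ewald factor is not
yet differentiated; `b` stands for `|η| / 2`. -/
def expand (b : ℝ) (j : Fin k) (T : LeibnizTerm k) : List (LeibnizTerm k) :=
  [⟨T.coeff, Function.update T.marked j true, T.words⟩,
    ⟨T.coeff * b, T.marked, consWord T.words j.succ j⟩,
    ⟨-(T.coeff * b), T.marked, consWord T.words j.castSucc j⟩]

theorem hasDerivAt_eval_update {f : Euc (m + 1) → ℂ} (hf : IsBoundedSmooth f) (η : Euc (m + 1))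
    {T : LeibnizTerm k} {r : Fin k → ℝ} {j : Fin k} (hT : T.marked j = false) (hr : 0 < r j) :
    HasDerivAt (fun t => T.eval m f η (Function.update r j t))
      ((T.expand (‖η‖ / 2) j).map (eval m f η r)).sum (r j) := by
  have hcoeff :=
    ((hasDerivAt_ewaldFactorProd_update m hT hr).const_mul T.coeff).ofReal_comp
  refine (hcoeff.mul (hasDerivAt_chainIntegral_update hf η T.words r j)).congr_deriv ?_
  simp only [expand, eval, List.map_cons, List.map_nil, List.sum_cons, List.sum_nil,
    Function.update_eq_self, Complex.real_smul]
  push_cast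
  ring

end LeibnizTerm

/-- The Leibniz expansion of the derivative of `LeibnizTerm.init κ` in the variables of the list. -/
def leibnizTerms (κ b : ℝ) : List (Fin k) → List (LeibnizTerm k)
  | [] => [.init κ]
  | j :: l => (leibnizTerms κ b l).flatMap (LeibnizTerm.expand b j)

theorem leibnizTerms_induction {κ b : ℝ} {P : List (Fin k) → LeibnizTerm k → Prop}
    (init : P [] (.init κ))
    (mark : ∀ j l T, P l T → P (j :: l) ⟨T.coeff, Function.update T.marked j true, T.words⟩)
    (succ : ∀ j l T, P l T → P (j :: l) ⟨T.coeff * b, T.marked, consWord T.words j.succ j⟩)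
    (castSucc : ∀ j l T, P l T →
      P (j :: l) ⟨-(T.coeff * b), T.marked, consWord T.words j.castSucc j⟩)
    {l : List (Fin k)} {T : LeibnizTerm k} (hT : T ∈ leibnizTerms κ b l) : P l T := by
  induction l generalizing T with
  | nil => rwa [List.mem_singleton.1 hT]
  | cons j l ih =>
    obtain ⟨T', hT', h⟩ := List.mem_flatMap.1 hT
    simp only [LeibnizTerm.expand, List.mem_cons, List.not_mem_nil, or_false] at h
    obtain rfl | rfl | rfl := h
    exacts [mark j l T' (ih hT'), succ j l T' (ih hT'), castSucc j l T' (ih hT')]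

theorem mem_of_mem_leibnizTerms {κ b : ℝ} {l : List (Fin k)} {T : LeibnizTerm k}
    (hT : T ∈ leibnizTerms κ b l) {i : Fin k} (hi : T.marked i = true) : i ∈ l := by
  refine leibnizTerms_induction (P := fun l T => T.marked i = true → i ∈ l)
    (by simp [LeibnizTerm.init]) (fun j l T ih h => ?_)
    (fun j l T ih h => List.mem_cons_of_mem _ (ih h))
    (fun j l T ih h => List.mem_cons_of_mem _ (ih h)) hT hi
  obtain rfl | hij := eq_or_ne i j
  · exact List.mem_cons_self
  · simp only [Function.update_of_ne hij] at h
    exact List.mem_cons_of_mem _ (ih h)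

theorem length_words_le_chainIncidence {κ b : ℝ} {l : List (Fin k)} (hl : l.Nodup)
    {T : LeibnizTerm k} (hT : T ∈ leibnizTerms κ b l) (i : Fin (k + 1)) :
    (T.words i).length ≤ chainIncidence l.toFinset i := by
  have hcons (j : Fin k) (l : List (Fin k)) (T : LeibnizTerm k) (hjl : (j :: l).Nodup)
      (ih : (T.words i).length ≤ chainIncidence l.toFinset i) {i' : Fin (k + 1)}
      (hi' : i' = j.succ ∨ i' = j.castSucc) :
      (consWord T.words i' j i).length ≤ chainIncidence (j :: l).toFinset i := by
    have hj : j ∉ l.toFinset := by simpa using (List.nodup_cons.1 hjl).1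
    have := length_consWord_add_chainIncidence_le T.words hj hi' i
    rw [List.toFinset_cons]
    omega
  refine leibnizTerms_induction
    (P := fun l T => l.Nodup → (T.words i).length ≤ chainIncidence l.toFinset i)
    (by simp [LeibnizTerm.init]) (fun j l T ih h => ?_)
    (fun j l T ih h => hcons j l T h (ih h.of_cons) (.inl rfl))
    (fun j l T ih h => hcons j l T h (ih h.of_cons) (.inr rfl)) hT hl
  rw [List.toFinset_cons]
  exact (ih h.of_cons).trans (chainIncidence_le_insert _ j i)

theorem abs_coeff_le {κ b B : ℝ} (hB : 1 ≤ B) (hb : |b| ≤ B) {l : List (Fin k)} {T : LeibnizTerm k}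
    (hT : T ∈ leibnizTerms κ b l) : |T.coeff| ≤ |κ| * B ^ l.length := by
  have hmul {c : ℝ} {N : ℕ} (hc : |c| ≤ |κ| * B ^ N) : |c * b| ≤ |κ| * B ^ (N + 1) := by
    rw [abs_mul, pow_succ, ← mul_assoc]
    gcongr
  refine leibnizTerms_induction (P := fun l T => |T.coeff| ≤ |κ| * B ^ l.length)
    (by simp [LeibnizTerm.init]) (fun _ l T ih => ih.trans ?_) (fun _ l T ih => hmul ih)
    (fun _ l T ih => (abs_neg _).trans_le (hmul ih)) hT
  gcongr
  simp

theorem length_leibnizTerms (κ b : ℝ) (l : List (Fin k)) :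
    (leibnizTerms κ b l).length = 3 ^ l.length := by
  induction l with
  | nil => rfl
  | cons j l ih =>
    simp only [leibnizTerms, List.length_flatMap, LeibnizTerm.expand, List.length_cons,
      List.length_nil, List.map_const', List.sum_replicate, ih, pow_succ, smul_eq_mul]

theorem hasDerivAt_list_sum {X : Type*} (L : List X) {F : X → ℝ → ℂ} {F' : X → ℂ} {x : ℝ}
    (h : ∀ T ∈ L, HasDerivAt (F T) (F' T) x) :
    HasDerivAt (fun t => (L.map fun T => F T t).sum) (L.map F').sum x := by
  induction L with
  | nil => exact hasDerivAt_const x 0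
  | cons T L ih =>
    simp only [List.map_cons, List.sum_cons]
    exact (h T List.mem_cons_self).add (ih fun T' hT' => h T' (List.mem_cons_of_mem _ hT'))

theorem enorm_list_sum_le {X : Type*} (L : List X) {F : X → ℂ} {M : ℝ≥0∞}
    (h : ∀ T ∈ L, ‖F T‖ₑ ≤ M) : ‖(L.map F).sum‖ₑ ≤ L.length * M := by
  induction L with
  | nil => simp
  | cons T L ih =>
    rw [List.map_cons, List.sum_cons, List.length_cons, Nat.cast_succ, add_mul, one_mul, add_comm]
    exact (enorm_add_le _ _).trans
      (add_le_add (ih fun T' hT' => h T' (List.mem_cons_of_mem _ hT')) (h T List.mem_cons_self))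

theorem partialR_eq_sum_leibnizTerms {f : Euc (m + 1) → ℂ} (hf : IsBoundedSmooth f)
    (η : Euc (m + 1)) {κ : ℝ} {G : (Fin k → ℝ) → ℂ}
    (hG : ∀ r, (∀ i, 0 < r i) → G r = (LeibnizTerm.init κ).eval m f η r) {l : List (Fin k)}
    (hl : l.Nodup) {r : Fin k → ℝ} (hr : ∀ i, 0 < r i) :
    partialR l G r = ((leibnizTerms κ (‖η‖ / 2) l).map (LeibnizTerm.eval m f η r)).sum := by
  induction l generalizing r with
  | nil => simp [partialR, leibnizTerms, hG r hr]
  | cons j l ih =>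
    obtain ⟨hj, hl⟩ := List.nodup_cons.1 hl
    have hnear : (fun t => partialR l G (Function.update r j t)) =ᶠ[nhds (r j)] fun t =>
        ((leibnizTerms κ (‖η‖ / 2) l).map fun T =>
          T.eval m f η (Function.update r j t)).sum := by
      filter_upwards [lt_mem_nhds (hr j)] with t ht
      refine ih hl fun i => ?_
      obtain rfl | hi := eq_or_ne i j
      · simpa using ht
      · simpa [Function.update_of_ne hi] using hr i
    have hmarked : ∀ T ∈ leibnizTerms κ (‖η‖ / 2) l, T.marked j = false := fun T hT =>
      Bool.eq_false_iff.2 fun h => hj (mem_of_mem_leibnizTerms hT h)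
    have hderiv := hasDerivAt_list_sum _ fun T hT =>
      LeibnizTerm.hasDerivAt_eval_update (r := r) hf η (hmarked T hT) (hr j)
    calc partialR (j :: l) G r = deriv (fun t => partialR l G (Function.update r j t)) (r j) := rfl
      _ = _ := by
        rw [hnear.deriv_eq, hderiv.deriv, leibnizTerms, List.map_flatMap, List.flatMap_def,
          List.sum_flatten, List.map_map]
        rfl

theorem enorm_eval_le {f : Euc (m + 1) → ℂ} {η : Euc (m + 1)} {r : Fin k → ℝ}
    (hr : ∀ i, 0 < r i) {κ B K : ℝ} {M : ℝ≥0∞} (hB1 : 1 ≤ B) (hB : ‖η‖ / 2 ≤ B) (hK1 : 1 ≤ K)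
    {l : List (Fin k)} (hl : l.Nodup)
    (hK : ∀ i ∈ l, |deriv (ewaldFactor m) (r i)| ≤ K * ewaldFactor m (r i))
    (hM : ∀ w : Fin (k + 1) → List (Fin k), (∀ i, (w i).length ≤ 2) →
      ∫⁻ θ, ‖chainProd f η ((2 : ℝ)⁻¹ • η) w θ (fun j => r j * (‖η‖ / 2))‖ₑ
        ∂(sphereMeasurePi (m + 1) k) ≤ M)
    {T : LeibnizTerm k} (hT : T ∈ leibnizTerms κ (‖η‖ / 2) l) :
    ‖T.eval m f η r‖ₑ ≤
      ENNReal.ofReal (|κ| * B ^ l.length * (K ^ k * ∏ i, ewaldFactor m (r i))) * M := by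
  rw [LeibnizTerm.eval, enorm_mul]
  refine mul_le_mul' ?_ ((enorm_integral_le_lintegral_enorm _).trans (hM _ fun i =>
    (length_words_le_chainIncidence hl hT i).trans (chainIncidence_le_two _ i)))
  rw [← ofReal_norm, Complex.norm_real, Real.norm_eq_abs, abs_mul]
  refine ENNReal.ofReal_le_ofReal (mul_le_mul
    (abs_coeff_le hB1 (by rwa [abs_of_nonneg (by positivity)]) hT)
    (abs_ewaldFactorProd_le hr hK1 fun i hi => hK i (mem_of_mem_leibnizTerms hT hi))
    (abs_nonneg _) (by positivity))

theorem enorm_partialR_le {f : Euc (m + 1) → ℂ} (hf : IsBoundedSmooth f) {η : Euc (m + 1)} {κ : ℝ}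
    {G : (Fin k → ℝ) → ℂ} (hG : ∀ r, (∀ i, 0 < r i) → G r = (LeibnizTerm.init κ).eval m f η r)
    {l : List (Fin k)} (hl : l.Nodup) {r : Fin k → ℝ} (hr : ∀ i, 0 < r i) {B K : ℝ} {M : ℝ≥0∞}
    (hB1 : 1 ≤ B) (hB : ‖η‖ / 2 ≤ B) (hK1 : 1 ≤ K)
    (hK : ∀ i ∈ l, |deriv (ewaldFactor m) (r i)| ≤ K * ewaldFactor m (r i))
    (hM : ∀ w : Fin (k + 1) → List (Fin k), (∀ i, (w i).length ≤ 2) →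
      ∫⁻ θ, ‖chainProd f η ((2 : ℝ)⁻¹ • η) w θ (fun j => r j * (‖η‖ / 2))‖ₑ
        ∂(sphereMeasurePi (m + 1) k) ≤ M) :
    ‖partialR l G r‖ₑ ≤ 3 ^ l.length *
      (ENNReal.ofReal (|κ| * B ^ l.length * (K ^ k * ∏ i, ewaldFactor m (r i))) * M) := by
  have hsum := enorm_list_sum_le (leibnizTerms κ (‖η‖ / 2) l) fun T hT =>
    enorm_eval_le (f := f) hr hB1 hB hK1 hl hK hM hT
  rw [partialR_eq_sum_leibnizTerms hf η hG hl hr]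
  simpa [length_leibnizTerms] using hsum

end LeibnizExpansion

/-! ### The chain of annuli -/

section Thickening

variable {m n k : ℕ}

theorem enorm_le_lintegral_Icc {E : Type*} [NormedAddCommGroup E] [NormedSpace ℝ E]
    [CompleteSpace E] {F F' : ℝ → E} (hF : ∀ t, HasDerivAt F (F' t) t) (hF' : Continuous F')
    (a : ℝ) : ‖F a‖ₑ ≤ ∫⁻ t in Icc a (a + 1), (‖F t‖ₑ + ‖F' t‖ₑ) := by
  have hvol : volume (Icc a (a + 1)) = 1 := by simp
  have hcont : Continuous F := continuous_iff_continuousAt.2 fun t => (hF t).continuousAt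
  have hbound : ∀ t ∈ Icc a (a + 1), ‖F a‖ₑ ≤ ‖F t‖ₑ + ∫⁻ u in Icc a (a + 1), ‖F' u‖ₑ := by
    intro t ht
    have hftc : F a = F t - ∫ u in a..t, F' u := by
      rw [intervalIntegral.integral_eq_sub_of_hasDerivAt (fun x _ => hF x)
        (hF'.intervalIntegrable _ _), sub_sub_cancel]
    rw [hftc]
    refine enorm_sub_le.trans (add_le_add le_rfl ?_)
    rw [intervalIntegral.integral_of_le ht.1]
    exact (enorm_integral_le_lintegral_enorm _).trans
      (lintegral_mono_set fun u hu => ⟨hu.1.le, hu.2.trans ht.2⟩)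
  calc ‖F a‖ₑ = ∫⁻ _ in Icc a (a + 1), ‖F a‖ₑ := by
        rw [setLIntegral_const, hvol, mul_one]
    _ ≤ ∫⁻ t in Icc a (a + 1), (‖F t‖ₑ + ∫⁻ u in Icc a (a + 1), ‖F' u‖ₑ) :=
        setLIntegral_mono' measurableSet_Icc hbound
    _ = ∫⁻ t in Icc a (a + 1), (‖F t‖ₑ + ‖F' t‖ₑ) := by
        rw [lintegral_add_left hcont.enorm.measurable, lintegral_add_left hcont.enorm.measurable,
          setLIntegral_const, hvol, mul_one]

/-- The sum of the norms of the derivatives of `f` of order at most four: two for `∂_𝐫^𝐚`, since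
each difference of the chain involves at most two of the `rᵢ`, and two more for the thickening of
the corresponding Ewald spheres into annuli. -/
def derivSum (f : Euc n → ℂ) (x : Euc n) : ℝ≥0∞ :=
  ∑ N ∈ Finset.range 5, ‖iteratedFDeriv ℝ N f x‖ₑ

theorem continuous_derivSum {f : Euc n → ℂ} (hf : ContDiff ℝ (⊤ : ℕ∞) f) :
    Continuous (derivSum f) :=
  continuous_finsetSum _ fun _ _ => (hf.continuous_iteratedFDeriv (mod_cast le_top)).enorm

/-- The product of the values of `H` along the chain `ξⱼ = c + yⱼ`. -/
def chainWeight (H : Euc n → ℝ≥0∞) (η c : Euc n) (y : Fin k → Euc n) : ℝ≥0∞ :=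
  ∏ i, H (chainDiff k η (fun j => c + y j) i)

theorem measurable_chainWeight {H : Euc n → ℝ≥0∞} (hH : Measurable H) (η c : Euc n) :
    Measurable (chainWeight (k := k) H η c) := by
  unfold chainWeight
  have hpoint : Continuous fun (y : Fin k → Euc n) j => c + y j := by fun_prop
  exact Finset.measurable_fun_prod _ fun i _ =>
    hH.comp ((continuous_chainDiff η i).comp hpoint).measurable

theorem enorm_chainProd_le_chainWeight (f : Euc n → ℂ) (η c : Euc n) {θ : Fin k → Euc n}
    (hθ : ∀ j, ‖θ j‖ ≤ 1) {w : Fin (k + 1) → List (Fin k)} (hw : ∀ i, (w i).length ≤ 4)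
    (ρ : Fin k → ℝ) :
    ‖chainProd f η c w θ ρ‖ₑ ≤ chainWeight (derivSum f) η c fun j => ρ j • θ j := by
  rw [chainProd, enorm_eq_nnnorm, nnnorm_prod, ENNReal.ofNNReal_finsetProd]
  refine Finset.prod_le_prod' fun i _ => ?_
  have hword := enorm_le_iff_norm_le.2 <|
    norm_wordDeriv_le f (w i) hθ (chainDiff k η (fun j => c + ρ j • θ j) i)
  refine hword.trans (Finset.single_le_sum
    (f := fun N => ‖iteratedFDeriv ℝ N f (chainDiff k η (fun j => c + ρ j • θ j) i)‖ₑ)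
    (fun _ _ => zero_le) (Finset.mem_range.2 (Nat.lt_succ_of_le (hw i))))

theorem enorm_chainProd_le_lintegral {f : Euc n → ℂ} (hf : ContDiff ℝ (⊤ : ℕ∞) f) (η c : Euc n)
    (w : Fin (k + 1) → List (Fin k)) (θ : Fin k → Euc n) (ρ : Fin k → ℝ) (j : Fin k) :
    ‖chainProd f η c w θ ρ‖ₑ ≤ ∫⁻ t in Icc (ρ j) (ρ j + 1),
      (‖chainProd f η c w θ (Function.update ρ j t)‖ₑ +
        (‖chainProd f η c (consWord w j.succ j) θ (Function.update ρ j t)‖ₑ +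
          ‖chainProd f η c (consWord w j.castSucc j) θ (Function.update ρ j t)‖ₑ)) := by
  have hcont (w : Fin (k + 1) → List (Fin k)) :
      Continuous fun t => chainProd f η c w θ (Function.update ρ j t) :=
    (continuous_chainProd hf η c w).comp (f := fun t => (θ, Function.update ρ j t)) (by fun_prop)
  have hderiv (t : ℝ) := hasDerivAt_chainProd_update hf η c w θ (Function.update ρ j t) j
  simp only [Function.update_idem, Function.update_self] at hderiv
  have hle := enorm_le_lintegral_Icc hderiv ((hcont _).sub (hcont _)) (ρ j)
  rw [Function.update_eq_self] at hle
  exact hle.trans (lintegral_mono fun t => add_le_add le_rfl enorm_sub_le)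

theorem enorm_chainProd_le_lmarginal {f : Euc n → ℂ} (hf : ContDiff ℝ (⊤ : ℕ∞) f) (η c : Euc n)
    {θ : Fin k → Euc n} (hθ : ∀ j, ‖θ j‖ ≤ 1) (ρ₀ : Fin k → ℝ) (J : Finset (Fin k))
    {w : Fin (k + 1) → List (Fin k)} (hw : ∀ i, (w i).length + chainIncidence J i ≤ 4)
    {ρ : Fin k → ℝ} (hρ : ∀ j ∈ J, ρ j = ρ₀ j) :
    ‖chainProd f η c w θ ρ‖ₑ ≤ 3 ^ J.card *
      lmarginal (fun j => (volume : Measure ℝ).restrict (Icc (ρ₀ j) (ρ₀ j + 1))) J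
        (fun t => chainWeight (derivSum f) η c fun j => t j • θ j) ρ := by
  have hmeas : Measurable fun t : Fin k → ℝ =>
      chainWeight (derivSum f) η c fun j => t j • θ j :=
    (measurable_chainWeight (continuous_derivSum hf).measurable η c).comp (by fun_prop)
  induction J using Finset.induction_on generalizing w ρ with
  | empty =>
    rw [Finset.card_empty, pow_zero, one_mul, lmarginal_empty]
    exact enorm_chainProd_le_chainWeight f η c hθ (fun i => by have := hw i; omega) ρ
  | insert j J hj ih =>
    refine (enorm_chainProd_le_lintegral hf η c w θ ρ j).trans ?_
    rw [Finset.card_insert_of_notMem hj, lmarginal_insert _ hmeas hj,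
      hρ j (Finset.mem_insert_self j J),
      ← lintegral_const_mul _ (by exact (hmeas.lmarginal _).comp (measurable_update ρ))]
    refine lintegral_mono fun t => ?_
    have hρ' : ∀ l ∈ J, Function.update ρ j t l = ρ₀ l := fun l hl => by
      rw [Function.update_of_ne (ne_of_mem_of_not_mem hl hj)]
      exact hρ l (Finset.mem_insert_of_mem hl)
    have hcons {i' : Fin (k + 1)} (hi' : i' = j.succ ∨ i' = j.castSucc) (i : Fin (k + 1)) :
        (consWord w i' j i).length + chainIncidence J i ≤ 4 :=
      (length_consWord_add_chainIncidence_le w hj hi' i).trans (hw i)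
    have hself := ih (fun i =>
      (Nat.add_le_add_left (chainIncidence_le_insert J j i) _).trans (hw i)) hρ'
    have hsucc := ih (hcons (.inl rfl)) hρ'
    have hcastSucc := ih (hcons (.inr rfl)) hρ'
    exact (add_le_add hself (add_le_add hsucc hcastSucc)).trans_eq (by ring)

theorem lintegral_pi_le_mul {ι X : Type*} [Fintype ι] [MeasurableSpace X] {μ ν : ι → Measure X}
    [∀ i, SigmaFinite (μ i)] [∀ i, SigmaFinite (ν i)] {c : ι → ℝ≥0∞}
    (h : ∀ i, ∀ F : X → ℝ≥0∞, Measurable F → ∫⁻ x, F x ∂(μ i) ≤ c i * ∫⁻ x, F x ∂(ν i))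
    {F : (ι → X) → ℝ≥0∞} (hF : Measurable F) :
    ∫⁻ x, F x ∂(Measure.pi μ) ≤ (∏ i, c i) * ∫⁻ x, F x ∂(Measure.pi ν) := by
  classical
  have hmarginal (s : Finset ι) (x : ι → X) :
      lmarginal μ s F x ≤ (∏ i ∈ s, c i) * lmarginal ν s F x := by
    induction s using Finset.induction_on generalizing x with
    | empty => simp
    | insert j s hj ih =>
      rw [lmarginal_insert _ hF hj, lmarginal_insert _ hF hj, Finset.prod_insert hj]
      have hmeas : Measurable fun y => lmarginal ν s F (Function.update x j y) :=
        (hF.lmarginal _).comp (measurable_update x)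
      calc ∫⁻ y, lmarginal μ s F (Function.update x j y) ∂(μ j)
          ≤ ∫⁻ y, (∏ i ∈ s, c i) * lmarginal ν s F (Function.update x j y) ∂(μ j) :=
            lintegral_mono fun y => ih _
        _ ≤ c j * ∫⁻ y, (∏ i ∈ s, c i) * lmarginal ν s F (Function.update x j y) ∂(ν j) :=
            h j _ (hmeas.const_mul _)
        _ = c j * (∏ i ∈ s, c i) * ∫⁻ y, lmarginal ν s F (Function.update x j y) ∂(ν j) := by
            rw [lintegral_const_mul _ hmeas, mul_assoc]
  obtain hempty | ⟨⟨x⟩⟩ := isEmpty_or_nonempty (ι → X)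
  · simp [lintegral_of_isEmpty]
  · simpa only [lmarginal_univ] using hmarginal Finset.univ x

theorem lintegral_pi_lintegral_pi_eq_lintegral_map {ι X Y Z : Type*} [Fintype ι]
    [MeasurableSpace X] [MeasurableSpace Y] [MeasurableSpace Z] (μ : ι → Measure X)
    (ν : ι → Measure Y) [∀ i, IsFiniteMeasure (μ i)] [∀ i, IsFiniteMeasure (ν i)] {g : X × Y → Z}
    (hg : Measurable g) {F : (ι → Z) → ℝ≥0∞} (hF : Measurable F) :
    ∫⁻ y, ∫⁻ x, F (fun i => g (x i, y i)) ∂(Measure.pi μ) ∂(Measure.pi ν) =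
      ∫⁻ z, F z ∂(Measure.pi fun i => ((μ i).prod (ν i)).map g) := by
  have hcomp : Measurable fun p : (ι → X) × (ι → Y) => F fun i => g (p.1 i, p.2 i) :=
    hF.comp (by fun_prop)
  rw [← lintegral_prod_symm' _ hcomp,
    ← (measurePreserving_arrowProdEquivProdArrow X Y ι μ ν).lintegral_comp hcomp,
    ← Measure.pi_map_pi (fun _ => hg.aemeasurable), lintegral_map hF (by fun_prop)]
  rfl

theorem exists_lintegral_sphereMeasurePi_le (m k : ℕ) :
    ∃ C : NNReal, ∀ ρ : Fin k → ℝ, (∀ i, 0 < ρ i) →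
      ∀ F : (Fin k → Euc (m + 1)) → ℝ≥0∞, Measurable F →
        ∫⁻ θ, (∫⁻ t, F (fun j => t j • θ j)
          ∂(Measure.pi fun j => (volume : Measure ℝ).restrict (Icc (ρ j) (ρ j + 1))))
            ∂(sphereMeasurePi (m + 1) k) ≤
          C * ENNReal.ofReal (∏ i, ρ i ^ m)⁻¹ *
            ∫⁻ y, F y ∂(Measure.pi fun j => volume.restrict (unitAnnulus (m + 1) (ρ j))) := by
  obtain ⟨C, hC⟩ := exists_lintegral_sphereMeasure_le_lintegral_unitAnnulus m
  refine ⟨C ^ k, fun ρ hρ F hF => ?_⟩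
  have hsmul : Measurable fun z : ℝ × Euc (m + 1) => z.1 • z.2 := by fun_prop
  have hsigma : SigmaFinite (sphereMeasure (m + 1)) := inferInstance
  have hpolar (j : Fin k) (F : Euc (m + 1) → ℝ≥0∞) (hF : Measurable F) :
      ∫⁻ y, F y ∂(((volume.restrict (Icc (ρ j) (ρ j + 1))).prod (sphereMeasure (m + 1))).map
        fun z : ℝ × Euc (m + 1) => z.1 • z.2) ≤ C * ENNReal.ofReal (ρ j ^ m)⁻¹ *
          ∫⁻ y in unitAnnulus (m + 1) (ρ j), F y := by
    rw [lintegral_map hF hsmul, lintegral_prod _ (by exact (hF.comp hsmul).aemeasurable)]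
    exact hC (ρ j) (hρ j) F hF
  rw [sphereMeasurePi, lintegral_pi_lintegral_pi_eq_lintegral_map _ _ hsmul hF]
  refine (lintegral_pi_le_mul hpolar hF).trans_eq ?_
  rw [Finset.prod_mul_distrib, ← Finset.prod_inv_distrib,
    ENNReal.ofReal_prod_of_nonneg (fun i _ => by have := hρ i; positivity)]
  simp

theorem exists_lintegral_enorm_chainProd_le (m k : ℕ) :
    ∃ C : NNReal, ∀ f : Euc (m + 1) → ℂ, ContDiff ℝ (⊤ : ℕ∞) f → ∀ η c : Euc (m + 1),
      ∀ w : Fin (k + 1) → List (Fin k), (∀ i, (w i).length ≤ 2) →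
      ∀ ρ : Fin k → ℝ, (∀ i, 0 < ρ i) →
        ∫⁻ θ, ‖chainProd f η c w θ ρ‖ₑ ∂(sphereMeasurePi (m + 1) k) ≤
          C * ENNReal.ofReal (∏ i, ρ i ^ m)⁻¹ * ∫⁻ y, chainWeight (derivSum f) η c y
            ∂(Measure.pi fun j => volume.restrict (unitAnnulus (m + 1) (ρ j))) := by
  obtain ⟨C, hC⟩ := exists_lintegral_sphereMeasurePi_le m k
  refine ⟨3 ^ k * C, fun f hf η c w hw ρ hρ => ?_⟩
  have hpoint (θ : Fin k → Euc (m + 1)) (hθ : ∀ j, ‖θ j‖ = 1) :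
      ‖chainProd f η c w θ ρ‖ₑ ≤ 3 ^ k * ∫⁻ t, chainWeight (derivSum f) η c (fun j => t j • θ j)
        ∂(Measure.pi fun j => (volume : Measure ℝ).restrict (Icc (ρ j) (ρ j + 1))) := by
    have hle := enorm_chainProd_le_lmarginal hf η c (fun j => (hθ j).le) ρ Finset.univ
      (fun i => Nat.add_le_add (hw i) (chainIncidence_le_two _ i)) fun _ _ => rfl
    simpa only [lmarginal_univ, Finset.card_univ, Fintype.card_fin] using hle
  calc ∫⁻ θ, ‖chainProd f η c w θ ρ‖ₑ ∂(sphereMeasurePi (m + 1) k)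
      ≤ ∫⁻ θ, (3 ^ k * ∫⁻ t, chainWeight (derivSum f) η c (fun j => t j • θ j)
          ∂(Measure.pi fun j => (volume : Measure ℝ).restrict (Icc (ρ j) (ρ j + 1))))
            ∂(sphereMeasurePi (m + 1) k) := by
        refine lintegral_mono_ae ?_
        filter_upwards [ae_norm_eq_one_sphereMeasurePi] with θ hθ
        exact hpoint θ hθ
    _ ≤ 3 ^ k * (C * ENNReal.ofReal (∏ i, ρ i ^ m)⁻¹ * ∫⁻ y, chainWeight (derivSum f) η c y
          ∂(Measure.pi fun j => volume.restrict (unitAnnulus (m + 1) (ρ j)))) := by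
        rw [lintegral_const_mul' _ _ (by simp)]
        gcongr
        exact hC ρ hρ _ (measurable_chainWeight (continuous_derivSum hf).measurable η c)
    _ = _ := by push_cast; ring

end Thickening

section RankedProduct

variable {n k : ℕ}

theorem lintegral_pi_prod_le_prod_of_rank {ι X : Type*} [Fintype ι] [DecidableEq ι]
    [MeasurableSpace X] {ν : ι → Measure X} [∀ i, SigmaFinite (ν i)] {u : ι → (ι → X) → ℝ≥0∞}
    (hu : ∀ i, Measurable (u i)) (rank : ι → ℕ)
    (hrank : ∀ i a, a ≠ i → rank i ≤ rank a → ∀ x y, u i (Function.update x a y) = u i x)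
    {M : ι → ℝ≥0∞} (hM : ∀ i x, ∫⁻ y, u i (Function.update x i y) ∂(ν i) ≤ M i) :
    ∫⁻ x, ∏ i, u i x ∂(Measure.pi ν) ≤ ∏ i, M i := by
  have hmarginal (s : Finset ι) (x : ι → X) :
      lmarginal ν s (fun x => ∏ i ∈ s, u i x) x ≤ ∏ i ∈ s, M i := by
    induction s using Finset.induction_on_max_value rank generalizing x with
    | empty => simp
    | insert a s ha hmax ih =>
      have hmeas (s : Finset ι) : Measurable fun x => ∏ i ∈ s, u i x :=
        Finset.measurable_fun_prod _ fun i _ => hu i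
      have hinner (x : ι → X) : ∫⁻ y, ∏ i ∈ insert a s, u i (Function.update x a y) ∂(ν a) ≤
          M a * ∏ i ∈ s, u i x := by
        have hfix (y : X) : ∏ i ∈ insert a s, u i (Function.update x a y) =
            u a (Function.update x a y) * ∏ i ∈ s, u i x := by
          rw [Finset.prod_insert ha]
          exact congrArg _ (Finset.prod_congr rfl fun i hi =>
            hrank i a (ne_of_mem_of_not_mem hi ha).symm (hmax i hi) x y)
        simp only [hfix]
        rw [lintegral_mul_const _ (by exact (hu a).comp (measurable_update x))]
        gcongr
        exact hM a x
      rw [lmarginal_insert' _ (hmeas _) ha, Finset.prod_insert ha]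
      calc lmarginal ν s
            (fun x => ∫⁻ y, ∏ i ∈ insert a s, u i (Function.update x a y) ∂(ν a)) x
          ≤ lmarginal ν s (fun x => M a * ∏ i ∈ s, u i x) x := lmarginal_mono hinner x
        _ = M a * lmarginal ν s (fun x => ∏ i ∈ s, u i x) x :=
            lintegral_const_mul _ (by exact (hmeas s).comp measurable_updateFinset)
        _ ≤ M a * ∏ i ∈ s, M i := by gcongr; exact ih x
  obtain hempty | ⟨⟨x⟩⟩ := isEmpty_or_nonempty (ι → X)
  · simp [lintegral_of_isEmpty]
  · simpa only [lmarginal_univ] using hmarginal Finset.univ x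

/-- An order of integration for the chain with its difference number `i₀` removed: the variables
are integrated from the one of largest rank downwards, that is from `i₀` outwards, and then
each integration meets exactly one of the remaining differences. -/
def chainRank (i₀ : Fin (k + 1)) (i : Fin k) : ℕ :=
  if i.castSucc < i₀ then i else k - i

theorem chainCoeff_succAbove_self (i₀ : Fin (k + 1)) (i : Fin k) :
    chainCoeff (i₀.succAbove i) i = 1 ∨ chainCoeff (i₀.succAbove i) i = -1 := by
  have hne : i.castSucc ≠ i.succ := Fin.castSucc_lt_succ.ne
  unfold chainCoeff Fin.succAbove
  split_ifs <;> simp_all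

theorem chainCoeff_succAbove_eq_zero {i₀ : Fin (k + 1)} {i a : Fin k} (hai : a ≠ i)
    (h : chainRank i₀ i ≤ chainRank i₀ a) : chainCoeff (i₀.succAbove i) a = 0 := by
  have hne : i₀.succAbove i ≠ a.succ ∧ i₀.succAbove i ≠ a.castSucc := by
    simp only [chainRank, Fin.succAbove, Fin.lt_def, Fin.ext_iff, Fin.val_castSucc, ne_eq] at *
    split_ifs at h ⊢ <;> simp only [Fin.val_castSucc, Fin.val_succ] <;> omega
  simp [chainCoeff, hne]

theorem chainDiff_update (η : Euc n) (ξ : Fin k → Euc n) (a : Fin k) (v : Euc n)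
    (i : Fin (k + 1)) : chainDiff k η (Function.update ξ a v) i =
      chainDiff k η ξ i + chainCoeff i a • (v - ξ a) := by
  have hsum (ξ : Fin k → Euc n) : ∑ j, chainCoeff i j • ξ j =
      chainCoeff i a • ξ a + ∑ j ∈ Finset.univ.erase a, chainCoeff i j • ξ j :=
    (Finset.add_sum_erase _ _ (Finset.mem_univ a)).symm
  rw [chainDiff_eq_add_sum, chainDiff_eq_add_sum, hsum, hsum ξ, Function.update_self,
    Finset.sum_congr rfl fun j hj => by rw [Function.update_of_ne (Finset.ne_of_mem_erase hj)]]
  module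

theorem sum_chainDiff (η : Euc n) (ξ : Fin k → Euc n) : ∑ i, chainDiff k η ξ i = η := by
  simp only [chainDiff_eq_add_sum, Finset.sum_add_distrib]
  rw [Finset.sum_comm]
  simp [← Finset.sum_smul, chainCoeff]

theorem lintegral_prod_chainDiff_succAbove_le (η c : Euc n) (i₀ : Fin (k + 1))
    {ν : Fin k → Measure (Euc n)} [∀ i, SigmaFinite (ν i)] {F : Euc n → ℝ≥0∞} (hF : Measurable F)
    {M : Fin k → ℝ≥0∞} (hsub_left : ∀ i z, ∫⁻ y, F (z - y) ∂(ν i) ≤ M i)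
    (hsub_right : ∀ i z, ∫⁻ y, F (y - z) ∂(ν i) ≤ M i) :
    ∫⁻ y, ∏ i, F (chainDiff k η (fun j => c + y j) (i₀.succAbove i)) ∂(Measure.pi ν) ≤
      ∏ i, M i := by
  have hupdate (y : Fin k → Euc n) (a : Fin k) (v : Euc n) :
      (fun j => c + Function.update y a v j) = Function.update (fun j => c + y j) a (c + v) :=
    Function.comp_update (c + ·) y a v
  have hshift : Continuous fun (y : Fin k → Euc n) j => c + y j := by fun_prop
  refine lintegral_pi_prod_le_prod_of_rank
    (u := fun i y => F (chainDiff k η (fun j => c + y j) (i₀.succAbove i)))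
    (fun i => hF.comp ((continuous_chainDiff η _).comp hshift).measurable) (chainRank i₀)
    (fun i a hai hrank y v => ?_) fun i y => ?_
  · rw [hupdate, chainDiff_update, chainCoeff_succAbove_eq_zero hai hrank, zero_smul, add_zero]
  · simp only [hupdate, chainDiff_update]
    rcases chainCoeff_succAbove_self i₀ i with h | h
    · convert hsub_right i (y i - chainDiff k η (fun j => c + y j) (i₀.succAbove i)) using 4
      rw [h]
      module
    · convert hsub_left i (y i + chainDiff k η (fun j => c + y j) (i₀.succAbove i)) using 4
      rw [h]
      module

theorem lintegral_lintegral_chainWeight_le {H : Euc n → ℝ≥0∞} (hH : Measurable H) (s : ℝ) :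
    ∫⁻ η, ∫⁻ y : Fin k → Euc n, chainWeight H η (s • η) y ≤ (∫⁻ x, H x) ^ (k + 1) := by
  have hmeas (i : Fin (k + 1)) :
      Measurable fun p : Euc n × (Fin k → Euc n) => H (chainDiff k p.1 p.2 i) := by
    refine hH.comp ?_
    simp only [chainDiff_eq_add_sum]
    split_ifs <;> fun_prop
  have hshift (η : Euc n) : ∫⁻ y : Fin k → Euc n, chainWeight H η (s • η) y =
      ∫⁻ y, ∏ i, H (chainDiff k η y i) :=
    lintegral_add_left_eq_self (fun y => ∏ i, H (chainDiff k η y i)) fun _ => s • η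
  have htail (η : Euc n) (y : Fin k → Euc n) (i : Fin k) :
      chainDiff k η y i.succ = chainDiff k 0 y i.succ := by
    simp [chainDiff_eq_add_sum, Fin.succ_ne_zero]
  have hhead (y : Fin k → Euc n) : ∫⁻ η, ∏ i, H (chainDiff k η y i) =
      (∫⁻ x, H x) * ∏ i : Fin k, H (chainDiff k 0 y i.succ) := by
    simp only [Fin.prod_univ_succ, htail]
    rw [lintegral_mul_const _ (by exact (hmeas 0).comp measurable_prodMk_right)]
    congr 1
    simp only [chainDiff_eq_add_sum, if_true]
    exact lintegral_add_right_eq_self H _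
  have htailmeas : Measurable fun y : Fin k → Euc n => ∏ i : Fin k, H (chainDiff k 0 y i.succ) :=
    Finset.measurable_fun_prod _ fun i _ => hH.comp (continuous_chainDiff 0 _).measurable
  have hrest : ∫⁻ y : Fin k → Euc n, ∏ i : Fin k, H (chainDiff k 0 y i.succ) ≤
      ∏ _ : Fin k, ∫⁻ x, H x := by
    simpa using! lintegral_prod_chainDiff_succAbove_le (0 : Euc n) 0 (0 : Fin (k + 1))
      (ν := fun _ => volume) hH (fun _ z => (lintegral_sub_left_eq_self H z).le)
      fun _ z => (lintegral_sub_right_eq_self H z).le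
  simp only [hshift]
  rw [lintegral_lintegral_swap
    (by exact (Finset.measurable_fun_prod _ fun i _ => hmeas i).aemeasurable)]
  simp only [hhead]
  rw [lintegral_const_mul _ htailmeas, pow_succ']
  gcongr
  simpa using hrest

end RankedProduct

section ChainBound

variable {m n k : ℕ}

theorem jap_le_mul {x y : Euc n} {c : ℝ} (hc : 1 ≤ c) (h : ‖x‖ ≤ c * ‖y‖) :
    jap x ≤ c * jap y := by
  unfold jap
  rw [Real.sqrt_le_left (by positivity), mul_pow, Real.sq_sqrt (by positivity)]
  have hsq : ‖x‖ ^ 2 ≤ (c * ‖y‖) ^ 2 := by gcongr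
  nlinarith

theorem jap_sub_comm (x y : Euc n) : jap (x - y) = jap (y - x) := by
  rw [jap, jap, norm_sub_rev]

theorem jap_rpow_nonneg (x : Euc n) (s : ℝ) : 0 ≤ jap x ^ s :=
  Real.rpow_nonneg (jap_pos x).le s

theorem exists_norm_sum_le_mul_norm (x : Fin (k + 1) → Euc n) :
    ∃ i₀, ‖∑ i, x i‖ ≤ (k + 1) * ‖x i₀‖ := by
  obtain ⟨i₀, hi₀⟩ := Finite.exists_max fun i => ‖x i‖
  refine ⟨i₀, (norm_sum_le_of_le _ fun i _ => hi₀ i).trans_eq ?_⟩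
  simp

-- The sum is over the index `i₀` of the largest `x i`, whose factor alone yields the decay in
-- `∑ i, x i`.
theorem prod_jap_rpow_neg_le {β p : ℝ} (hβ : 0 ≤ β) (hpβ : p ≤ β) (x : Fin (k + 1) → Euc n) :
    ∏ i, jap (x i) ^ (-β) ≤ ((k : ℝ) + 1) ^ β * jap (∑ i, x i) ^ (-β) *
      ∑ i₀ : Fin (k + 1), ∏ i, jap (x (i₀.succAbove i)) ^ (-p) := by
  have hnonneg (i₀ : Fin (k + 1)) (s : ℝ) : 0 ≤ ∏ i, jap (x (i₀.succAbove i)) ^ s :=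
    Finset.prod_nonneg fun i _ => jap_rpow_nonneg _ _
  obtain ⟨i₀, hi₀⟩ := exists_norm_sum_le_mul_norm x
  have hlarge : jap (x i₀) ^ (-β) ≤ ((k : ℝ) + 1) ^ β * jap (∑ i, x i) ^ (-β) := by
    have hη : jap (∑ i, x i) ^ β ≤ ((k : ℝ) + 1) ^ β * jap (x i₀) ^ β := by
      rw [← Real.mul_rpow (by positivity) (jap_pos _).le]
      exact Real.rpow_le_rpow (jap_pos _).le (jap_le_mul (by simp) hi₀) hβ
    have hpos (x : Euc n) : 0 < jap x ^ β := Real.rpow_pos_of_pos (jap_pos x) β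
    rwa [Real.rpow_neg (jap_pos _).le, Real.rpow_neg (jap_pos _).le, ← div_eq_mul_inv,
      inv_eq_one_div, div_le_div_iff₀ (hpos _) (hpos _), one_mul]
  have hothers : ∏ i, jap (x (i₀.succAbove i)) ^ (-β) ≤
      ∑ i₀ : Fin (k + 1), ∏ i, jap (x (i₀.succAbove i)) ^ (-p) :=
    calc ∏ i, jap (x (i₀.succAbove i)) ^ (-β) ≤ ∏ i, jap (x (i₀.succAbove i)) ^ (-p) :=
          Finset.prod_le_prod (fun _ _ => jap_rpow_nonneg _ _) fun _ _ =>
            Real.rpow_le_rpow_of_exponent_le (one_le_jap _) (by linarith)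
      _ ≤ _ := Finset.single_le_sum (f := fun i₀ : Fin (k + 1) =>
          ∏ i, jap (x (i₀.succAbove i)) ^ (-p)) (fun i₁ _ => hnonneg i₁ _) (Finset.mem_univ i₀)
  rw [Fin.prod_univ_succAbove _ i₀]
  exact mul_le_mul hlarge hothers (hnonneg i₀ _)
    (mul_nonneg (by positivity) (jap_rpow_nonneg _ _))

theorem chainWeight_le_mul_sum {β p : ℝ} (hβ : 0 ≤ β) (hpβ : p ≤ β) {G h : Euc n → ℝ≥0∞}
    (hG : ∀ x, G x ≤ ENNReal.ofReal (jap x ^ (-β)) * h x) (η c : Euc n) (y : Fin k → Euc n) :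
    chainWeight G η c y ≤ ENNReal.ofReal (((k : ℝ) + 1) ^ β * jap η ^ (-β)) *
      ∑ i₀ : Fin (k + 1), (∏ i, ENNReal.ofReal
        (jap (chainDiff k η (fun j => c + y j) (i₀.succAbove i)) ^ (-p))) *
          chainWeight h η c y := by
  have hsum := sum_chainDiff η fun j => c + y j
  set x := chainDiff k η fun j => c + y j
  calc chainWeight G η c y
      ≤ ∏ i, (ENNReal.ofReal (jap (x i) ^ (-β)) * h (x i)) := Finset.prod_le_prod' fun i _ => hG _
    _ = ENNReal.ofReal (∏ i, jap (x i) ^ (-β)) * chainWeight h η c y := by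
        rw [Finset.prod_mul_distrib, ENNReal.ofReal_prod_of_nonneg fun _ _ => jap_rpow_nonneg _ _,
          chainWeight]
    _ ≤ ENNReal.ofReal (((k : ℝ) + 1) ^ β * jap (∑ i, x i) ^ (-β) *
          ∑ i₀ : Fin (k + 1), ∏ i, jap (x (i₀.succAbove i)) ^ (-p)) * chainWeight h η c y := by
        gcongr
        exact prod_jap_rpow_neg_le hβ hpβ x
    _ = _ := by
        rw [hsum, ENNReal.ofReal_mul (mul_nonneg (by positivity) (jap_rpow_nonneg _ _)),
          ENNReal.ofReal_sum_of_nonneg fun _ _ =>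
            Finset.prod_nonneg fun _ _ => jap_rpow_nonneg _ _, mul_assoc, ← Finset.sum_mul]
        simp only [ENNReal.ofReal_prod_of_nonneg fun _ _ => jap_rpow_nonneg _ _]

theorem lintegral_prod_mul_chainWeight_le (η c : Euc n) (i₀ : Fin (k + 1))
    {ν : Fin k → Measure (Euc n)} [∀ i, SigmaFinite (ν i)] {u h : Euc n → ℝ≥0∞}
    (hu : Measurable u) (hh : Measurable h) {M : Fin k → ℝ≥0∞}
    (hsub_left : ∀ i z, ∫⁻ y, u (z - y) ^ 2 ∂(ν i) ≤ M i)
    (hsub_right : ∀ i z, ∫⁻ y, u (y - z) ^ 2 ∂(ν i) ≤ M i) :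
    ∫⁻ y, (∏ i, u (chainDiff k η (fun j => c + y j) (i₀.succAbove i))) * chainWeight h η c y
        ∂(Measure.pi ν) ≤
      (∏ i, M i) ^ (1 / 2 : ℝ) *
        (∫⁻ y, chainWeight (fun x => h x ^ 2) η c y ∂(Measure.pi ν)) ^ (1 / 2 : ℝ) := by
  have hshift : Continuous fun (y : Fin k → Euc n) j => c + y j := by fun_prop
  refine (ENNReal.lintegral_mul_le_Lp_mul_Lq (Measure.pi ν) Real.HolderConjugate.two_two
    (Finset.measurable_fun_prod _ fun i _ =>
      hu.comp ((continuous_chainDiff η _).comp hshift).measurable).aemeasurable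
    (measurable_chainWeight hh η c).aemeasurable).trans ?_
  simp only [ENNReal.rpow_two, chainWeight, ← Finset.prod_pow]
  gcongr
  exact lintegral_prod_chainDiff_succAbove_le η c i₀ (hu.pow_const 2) hsub_left hsub_right

theorem lintegral_pi_restrict_le {ι : Type*} [Fintype ι] (s : ι → Set (Euc n))
    (F : (ι → Euc n) → ℝ≥0∞) :
    ∫⁻ y, F y ∂(Measure.pi fun i => volume.restrict (s i)) ≤ ∫⁻ y, F y := by
  rw [← Measure.restrict_pi_pi]
  exact setLIntegral_le_lintegral _ _

theorem exists_lintegral_jap_mul_chainWeight_le (k : ℕ) {p : ℝ} (hp : 0 ≤ p) (hpm : p < m) :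
    ∃ C : NNReal, ∀ (η c : Euc (m + 1)) (i₀ : Fin (k + 1)) (ρ : Fin k → ℝ), (∀ i, 0 < ρ i) →
      ∀ h : Euc (m + 1) → ℝ≥0∞, Measurable h →
        ∫⁻ y, (∏ i, ENNReal.ofReal
            (jap (chainDiff k η (fun j => c + y j) (i₀.succAbove i)) ^ (-(p / 2)))) *
              chainWeight h η c y ∂(Measure.pi fun j => volume.restrict (unitAnnulus (m + 1) (ρ j)))
          ≤ C * ENNReal.ofReal (∏ i, (1 + ρ i) ^ ((m - p) / 2)) *
            (∫⁻ y : Fin k → Euc (m + 1), chainWeight (fun x => h x ^ 2) η c y) ^ (1 / 2 : ℝ) := by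
  obtain ⟨C, hC⟩ := exists_lintegral_unitAnnulus_jap_rpow_le hp hpm
  refine ⟨(C ^ k) ^ (1 / 2 : ℝ), fun η c i₀ ρ hρ h hh => ?_⟩
  have hsq (x : Euc (m + 1)) :
      ENNReal.ofReal (jap x ^ (-(p / 2))) ^ 2 = ENNReal.ofReal (jap x ^ (-p)) := by
    rw [← ENNReal.ofReal_pow (jap_rpow_nonneg _ _), ← Real.rpow_mul_natCast (jap_pos x).le]
    congr 2
    push_cast
    ring
  have hCS := lintegral_prod_mul_chainWeight_le η c i₀
    (ν := fun j => volume.restrict (unitAnnulus (m + 1) (ρ j)))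
    (u := fun x => ENNReal.ofReal (jap x ^ (-(p / 2)))) (by fun_prop) hh
    (M := fun i => C * ENNReal.ofReal ((1 + ρ i) ^ (m - p)))
    (fun i z => by simpa only [hsq] using hC (ρ i) z)
    (fun i z => by simpa only [hsq, jap_sub_comm _ z] using hC (ρ i) z)
  have hbase (i : Fin k) : 0 ≤ 1 + ρ i := by linarith [hρ i]
  have hroot : (∏ i, (C * ENNReal.ofReal ((1 + ρ i) ^ (m - p)))) ^ (1 / 2 : ℝ) =
      ((C ^ k) ^ (1 / 2 : ℝ) : NNReal) * ENNReal.ofReal (∏ i, (1 + ρ i) ^ ((m - p) / 2)) := by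
    rw [Finset.prod_mul_distrib, ENNReal.mul_rpow_of_nonneg _ _ (by norm_num),
      ENNReal.coe_rpow_of_nonneg _ (by norm_num), Finset.prod_const, Finset.card_univ,
      Fintype.card_fin, ENNReal.coe_pow,
      ← ENNReal.ofReal_prod_of_nonneg fun i _ => Real.rpow_nonneg (hbase i) _,
      ENNReal.ofReal_rpow_of_nonneg
        (Finset.prod_nonneg fun i _ => Real.rpow_nonneg (hbase i) _) (by norm_num),
      ← Real.finsetProd_rpow _ _ fun i _ => Real.rpow_nonneg (hbase i) _]
    simp only [← Real.rpow_mul (hbase _), mul_one_div]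
  refine hCS.trans (mul_le_mul' hroot.le (ENNReal.rpow_le_rpow ?_ (by norm_num)))
  exact lintegral_pi_restrict_le _ _

theorem exists_lintegral_chainWeight_le (k : ℕ) {β p : ℝ} (hβ : 0 ≤ β) (hp : 0 ≤ p)
    (hpm : p < m) (hpβ : p ≤ 2 * β) :
    ∃ C : NNReal, ∀ (η c : Euc (m + 1)) (ρ : Fin k → ℝ), (∀ i, 0 < ρ i) →
      ∀ G h : Euc (m + 1) → ℝ≥0∞, Measurable h →
        (∀ x, G x ≤ ENNReal.ofReal (jap x ^ (-β)) * h x) →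
        ∫⁻ y, chainWeight G η c y ∂(Measure.pi fun j => volume.restrict (unitAnnulus (m + 1) (ρ j)))
          ≤ C * ENNReal.ofReal (jap η ^ (-β) * ∏ i, (1 + ρ i) ^ ((m - p) / 2)) *
            (∫⁻ y : Fin k → Euc (m + 1), chainWeight (fun x => h x ^ 2) η c y) ^ (1 / 2 : ℝ) := by
  obtain ⟨C, hC⟩ := exists_lintegral_jap_mul_chainWeight_le (m := m) k hp hpm
  refine ⟨(((k : ℝ) + 1) ^ β).toNNReal * ((k + 1) * C), fun η c ρ hρ G h hh hG => ?_⟩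
  set ν := Measure.pi fun j => volume.restrict (unitAnnulus (m + 1) (ρ j))
  set P := ENNReal.ofReal (∏ i, (1 + ρ i) ^ ((m - p) / 2))
  set Q := (∫⁻ y : Fin k → Euc (m + 1), chainWeight (fun x => h x ^ 2) η c y) ^ (1 / 2 : ℝ)
  have hshift : Continuous fun (y : Fin k → Euc (m + 1)) j => c + y j := by fun_prop
  calc ∫⁻ y, chainWeight G η c y ∂ν
      ≤ ∫⁻ y, ENNReal.ofReal (((k : ℝ) + 1) ^ β * jap η ^ (-β)) * ∑ i₀ : Fin (k + 1),
          (∏ i, ENNReal.ofReal (jap (chainDiff k η (fun j => c + y j) (i₀.succAbove i)) ^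
            (-(p / 2)))) * chainWeight h η c y ∂ν :=
        lintegral_mono fun y => chainWeight_le_mul_sum hβ (by linarith) hG η c y
    _ = ENNReal.ofReal (((k : ℝ) + 1) ^ β * jap η ^ (-β)) * ∑ i₀ : Fin (k + 1),
          ∫⁻ y, (∏ i, ENNReal.ofReal (jap (chainDiff k η (fun j => c + y j) (i₀.succAbove i)) ^
            (-(p / 2)))) * chainWeight h η c y ∂ν := by
        rw [lintegral_const_mul' _ _ ENNReal.ofReal_ne_top, lintegral_finsetSum]
        have hjap : Measurable fun x : Euc (m + 1) => ENNReal.ofReal (jap x ^ (-(p / 2))) := by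
          fun_prop
        exact fun i₀ _ => (Finset.measurable_fun_prod _ fun i _ =>
          hjap.comp ((continuous_chainDiff η _).comp hshift).measurable).mul
            (measurable_chainWeight hh η c)
    _ ≤ ENNReal.ofReal (((k : ℝ) + 1) ^ β * jap η ^ (-β)) *
          ∑ _ : Fin (k + 1), C * P * Q := by
        gcongr with i₀
        exact hC η c i₀ ρ hρ h hh
    _ = _ := by
        rw [ENNReal.ofReal_mul (by positivity), ENNReal.ofReal_mul (jap_rpow_nonneg _ _),
          ENNReal.ofReal]
        simp only [Finset.sum_const, Finset.card_univ, Fintype.card_fin, nsmul_eq_mul]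
        push_cast
        ring

end ChainBound

/-! ### The Fourier side: `q̂ = ⟨·⟩^(-β) h` with `h` in `L²` -/

section JapaneseBracketDerivatives

variable {E : Type*} [NormedAddCommGroup E] [InnerProductSpace ℝ E]

theorem norm_iteratedFDeriv_one_add_norm_sq_div_le (x : E) {i : ℕ} (hi : 1 ≤ i) :
    ‖iteratedFDeriv ℝ i (fun y : E => (1 + ‖x‖ ^ 2)⁻¹ * (1 + ‖y‖ ^ 2)) x‖ ≤ 2 ^ i := by
  obtain ⟨i, rfl⟩ := Nat.exists_eq_add_of_le' hi
  set c := (1 + ‖x‖ ^ 2)⁻¹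
  have hc : 0 ≤ c := by positivity
  have hc1 : c ≤ 1 := inv_le_one_of_one_le₀ (by nlinarith [sq_nonneg ‖x‖])
  have hcx : c * ‖x‖ ≤ 1 := by
    rw [inv_mul_le_one₀ (by positivity)]
    nlinarith [sq_nonneg (‖x‖ - 1)]
  let L : E →L[ℝ] E →L[ℝ] ℝ := c • 2 • innerSL ℝ
  have hfderiv : fderiv ℝ (fun y : E => c * (1 + ‖y‖ ^ 2)) = L := by
    ext1 y
    have hdiff : DifferentiableAt ℝ (fun y : E => ‖y‖ ^ 2) y := differentiableAt_id.norm_sq ℝ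
    rw [fderiv_const_mul (hdiff.const_add 1), fderiv_const_add, fderiv_norm_sq]
    rfl
  have hL (z : E) : ‖L z‖ = 2 * (c * ‖z‖) := by
    have hz : L z = c • 2 • innerSL ℝ z := rfl
    rw [hz, norm_smul, ← Nat.cast_smul_eq_nsmul ℝ, norm_smul, innerSL_apply_norm,
      Real.norm_of_nonneg hc, Nat.cast_ofNat, Real.norm_ofNat]
    ring
  rw [← norm_iteratedFDeriv_fderiv, hfderiv]
  rcases i with _ | _ | i
  · rw [norm_iteratedFDeriv_zero, hL, zero_add, pow_one]
    linarith
  · rw [← norm_iteratedFDeriv_fderiv, norm_iteratedFDeriv_zero, L.fderiv]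
    refine L.opNorm_le_bound (by positivity) fun z => ?_
    rw [hL, zero_add, one_add_one_eq_two]
    nlinarith [norm_nonneg z]
  · rw [← norm_iteratedFDeriv_fderiv]
    have hconst : fderiv ℝ L = fun _ => L := funext fun _ => L.fderiv
    rw [hconst, iteratedFDeriv_succ_const]
    simp

-- Rescaling `1 + ‖y‖²` by its value at `x` makes every derivative at `x` bounded uniformly in `x`.
theorem exists_norm_iteratedFDeriv_one_add_norm_sq_rpow_le (s : ℝ) (N : ℕ) :
    ∃ C : ℝ, 0 ≤ C ∧ ∀ x : E, ‖iteratedFDeriv ℝ N (fun y : E => (1 + ‖y‖ ^ 2) ^ s) x‖ ≤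
      C * (1 + ‖x‖ ^ 2) ^ s := by
  let D (i : ℕ) : ℝ := ‖iteratedFDerivWithin ℝ i (fun t : ℝ => t ^ s) (Ioi 0) 1‖
  refine ⟨N.factorial * (∑ i ∈ Finset.range (N + 1), D i) * 2 ^ N, by positivity, fun x => ?_⟩
  have ht : 0 < 1 + ‖x‖ ^ 2 := by positivity
  let u (y : E) : ℝ := (1 + ‖x‖ ^ 2)⁻¹ * (1 + ‖y‖ ^ 2)
  have hscale : (fun y : E => (1 + ‖y‖ ^ 2) ^ s) =
      (1 + ‖x‖ ^ 2) ^ s • ((fun t : ℝ => t ^ s) ∘ u) := by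
    ext y
    simp only [Pi.smul_apply, Function.comp, smul_eq_mul, u]
    rw [← Real.mul_rpow ht.le (by positivity), mul_inv_cancel_left₀ ht.ne']
  have hu : ContDiff ℝ N u := contDiff_const.mul (contDiff_const.add (contDiff_id.norm_sq ℝ))
  have hpow : ContDiffOn ℝ N (fun t : ℝ => t ^ s) (Ioi 0) :=
    contDiffOn_id.rpow_const_of_ne fun t ht => (ne_of_gt ht)
  have hmaps : MapsTo u univ (Ioi 0) := fun y _ => mem_Ioi.2 (by positivity)
  have hcomp : ContDiff ℝ N ((fun t : ℝ => t ^ s) ∘ u) :=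
    contDiffOn_univ.1 (hpow.comp hu.contDiffOn hmaps)
  have hux : u x = 1 := inv_mul_cancel₀ ht.ne'
  have hbound := norm_iteratedFDerivWithin_comp_le (n := N) (x := x) hpow hu.contDiffOn le_rfl
    (uniqueDiffOn_Ioi 0) uniqueDiffOn_univ hmaps (mem_univ x)
    (C := ∑ i ∈ Finset.range (N + 1), D i) (D := 2)
    (fun i hi => hux ▸ Finset.single_le_sum (f := D) (fun _ _ => norm_nonneg _)
      (Finset.mem_range.2 (by omega)))
    (fun i hi _ => iteratedFDerivWithin_univ (𝕜 := ℝ) (f := u) (n := i) ▸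
      norm_iteratedFDeriv_one_add_norm_sq_div_le x hi)
  rw [iteratedFDerivWithin_univ] at hbound
  rw [hscale, iteratedFDeriv_const_smul_apply hcomp.contDiffAt, norm_smul,
    Real.norm_of_nonneg (by positivity), mul_comm]
  gcongr

end JapaneseBracketDerivatives

section JapaneseBracketWeight

variable {n : ℕ}

theorem jap_rpow (x : Euc n) (s : ℝ) : jap x ^ s = (1 + ‖x‖ ^ 2) ^ (s / 2) := by
  rw [jap, Real.sqrt_eq_rpow, ← Real.rpow_mul (by positivity)]
  congr 1
  ring

theorem contDiff_jap_rpow (s : ℝ) : ContDiff ℝ (⊤ : ℕ∞) fun x : Euc n => jap x ^ s := by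
  simp_rw [jap_rpow]
  exact (Function.hasTemperateGrowth_one_add_norm_sq_rpow (Euc n) (s / 2)).1

theorem exists_derivSum_jap_rpow_smul_le (n : ℕ) (s : ℝ) : ∃ C : NNReal, ∀ g : Euc n → ℂ,
    ContDiff ℝ (⊤ : ℕ∞) g → ∀ x,
      derivSum (fun y => jap y ^ s • g y) x ≤ ENNReal.ofReal (jap x ^ s) * (C * derivSum g x) := by
  choose c hc0 hc using fun N =>
    exists_norm_iteratedFDeriv_one_add_norm_sq_rpow_le (E := Euc n) (s / 2) N
  let A (N : ℕ) : ℝ := ∑ i ∈ Finset.range (N + 1), (N.choose i : ℝ) * c i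
  refine ⟨∑ N ∈ Finset.range 5, (A N).toNNReal, fun g hg x => ?_⟩
  have hderiv : ∀ N ∈ Finset.range 5, ‖iteratedFDeriv ℝ N (fun y => jap y ^ s • g y) x‖ₑ ≤
      ENNReal.ofReal (jap x ^ s) * (ENNReal.ofReal (A N) * derivSum g x) := fun N hN => by
    have hleibniz : ‖iteratedFDeriv ℝ N (fun y => jap y ^ s • g y) x‖ ≤ jap x ^ s *
        ∑ i ∈ Finset.range (N + 1), (N.choose i : ℝ) * c i * ‖iteratedFDeriv ℝ (N - i) g x‖ := by
      refine (norm_iteratedFDeriv_smul_le (contDiff_jap_rpow s) hg x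
        (by exact_mod_cast le_top)).trans ?_
      rw [Finset.mul_sum]
      refine Finset.sum_le_sum fun i _ => ?_
      have hi := hc i x
      simp_rw [← jap_rpow] at hi
      calc _ ≤ (N.choose i : ℝ) * (c i * jap x ^ s) * ‖iteratedFDeriv ℝ (N - i) g x‖ := by gcongr
        _ = _ := by ring
    have hleibniz' := ENNReal.ofReal_le_ofReal hleibniz
    rw [ofReal_norm, ENNReal.ofReal_mul (jap_rpow_nonneg x s),
      ENNReal.ofReal_sum_of_nonneg fun i _ => by have := hc0 i; positivity] at hleibniz'
    refine hleibniz'.trans (mul_le_mul_right ?_ _)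
    rw [ENNReal.ofReal_sum_of_nonneg fun i _ => by have := hc0 i; positivity, Finset.sum_mul]
    refine Finset.sum_le_sum fun i _ => ?_
    rw [ENNReal.ofReal_mul (by have := hc0 i; positivity), ofReal_norm]
    have hN' : N - i ∈ Finset.range 5 := by simp only [Finset.mem_range] at hN ⊢; omega
    exact mul_le_mul_right (Finset.single_le_sum
      (f := fun N => ‖iteratedFDeriv ℝ N g x‖ₑ) (fun _ _ => zero_le) hN') _
  calc derivSum (fun y => jap y ^ s • g y) x
      ≤ ∑ N ∈ Finset.range 5, ENNReal.ofReal (jap x ^ s) * (ENNReal.ofReal (A N) * derivSum g x) :=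
        Finset.sum_le_sum hderiv
    _ = _ := by
        rw [← Finset.mul_sum, ← Finset.sum_mul]
        push_cast
        rfl

end JapaneseBracketWeight

section FourierDerivatives

open scoped FourierTransform SchwartzMap LineDeriv

variable {E : Type*} [NormedAddCommGroup E] [InnerProductSpace ℝ E]

theorem norm_le_sum_norm_apply_orthonormalBasis {ι : Type*} [Fintype ι] {N : ℕ}
    (b : OrthonormalBasis ι ℝ E) (L : ContinuousMultilinearMap ℝ (fun _ : Fin N => E) ℂ) :
    ‖L‖ ≤ ∑ w : Fin N → ι, ‖L fun i => b (w i)‖ := by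
  refine ContinuousMultilinearMap.opNorm_le_bound (by positivity) fun x => ?_
  have hexpand : L x = ∑ w : Fin N → ι, (∏ i, b.repr (x i) (w i)) • L fun i => b (w i) := by
    have hx : x = fun i => ∑ j, b.repr (x i) j • b j := funext fun i => (b.sum_repr (x i)).symm
    conv_lhs => rw [hx]
    simp_rw [ContinuousMultilinearMap.map_sum, ContinuousMultilinearMap.map_smul_univ]
  rw [hexpand, Finset.sum_mul]
  refine (norm_sum_le _ _).trans (Finset.sum_le_sum fun w _ => ?_)
  rw [norm_smul, mul_comm, norm_prod]
  gcongr with i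
  exact (PiLp.norm_apply_le (b.repr (x i)) (w i)).trans_eq (b.repr.norm_map (x i))

theorem sum_sq_le_card_mul_sum_sq {ι : Type*} (s : Finset ι) (f : ι → ℝ≥0∞) :
    (∑ i ∈ s, f i) ^ 2 ≤ s.card * ∑ i ∈ s, f i ^ 2 := by
  have h := ENNReal.rpow_sum_le_const_mul_sum_rpow s f one_le_two
  norm_num at h
  exact h

variable [FiniteDimensional ℝ E] [MeasurableSpace E] [BorelSpace E]

theorem exists_iteratedLineDeriv_fourier_eq {N : ℕ} (w : Fin N → E) (hw : ∀ i, ‖w i‖ ≤ 1)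
    (v : 𝓢(E, ℂ)) :
    ∃ V : 𝓢(E, ℂ), ∂^{w} (𝓕 v) = 𝓕 V ∧ ∀ x, ‖V x‖ ≤ (2 * Real.pi * ‖x‖) ^ N * ‖v x‖ := by
  induction N with
  | zero => exact ⟨v, rfl, by simp⟩
  | succ N ih =>
    obtain ⟨V, hV, hVv⟩ := ih (Fin.tail w) fun i => hw _
    refine ⟨-(2 * Real.pi * Complex.I) • SchwartzMap.smulLeftCLM ℂ (inner ℝ · (w 0)) V, ?_,
      fun x => ?_⟩
    · rw [LineDeriv.iteratedLineDerivOp_succ_left, hV, SchwartzMap.lineDerivOp_fourier_eq]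
    · have hgrowth : Function.HasTemperateGrowth fun x : E => (inner ℝ x (w 0) : ℝ) := by fun_prop
      have hinner : ‖(inner ℝ x (w 0) : ℝ)‖ ≤ ‖x‖ :=
        (norm_inner_le_norm x (w 0)).trans (mul_le_of_le_one_right (norm_nonneg _) (hw 0))
      have hconst : ‖-(2 * (Real.pi : ℂ) * Complex.I)‖ = 2 * Real.pi := by
        simp [abs_of_pos Real.pi_pos]
      rw [smul_apply, SchwartzMap.smulLeftCLM_apply_apply hgrowth, norm_smul, norm_smul, hconst]
      calc 2 * Real.pi * (‖(inner ℝ x (w 0) : ℝ)‖ * ‖V x‖)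
          ≤ 2 * Real.pi * (‖x‖ * ((2 * Real.pi * ‖x‖) ^ N * ‖v x‖)) := by
            have := Real.pi_pos
            gcongr
            exact hVv x
        _ = _ := by ring

theorem lintegral_enorm_sq_eq_ofReal_integral (f : 𝓢(E, ℂ)) :
    ∫⁻ x, ‖f x‖ₑ ^ 2 = ENNReal.ofReal (∫ x, ‖f x‖ ^ 2) := by
  rw [ofReal_integral_eq_lintegral_ofReal ((f.memLp 2 volume).integrable_norm_pow two_ne_zero)
    (Eventually.of_forall fun x => by positivity)]
  simp_rw [ENNReal.ofReal_pow (norm_nonneg _), ofReal_norm]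

theorem lintegral_enorm_sq_fourier (f : 𝓢(E, ℂ)) :
    ∫⁻ x, ‖(𝓕 f : 𝓢(E, ℂ)) x‖ₑ ^ 2 = ∫⁻ x, ‖f x‖ₑ ^ 2 := by
  rw [lintegral_enorm_sq_eq_ofReal_integral, lintegral_enorm_sq_eq_ofReal_integral,
    SchwartzMap.integral_norm_sq_fourier]

theorem lintegral_comp_smul (μ : Measure E) [μ.IsAddHaarMeasure] {R : ℝ} (hR : R ≠ 0)
    (F : E → ℝ≥0∞) :
    ∫⁻ x, F (R • x) ∂μ = ENNReal.ofReal |(R ^ Module.finrank ℝ E)⁻¹| * ∫⁻ x, F x ∂μ := by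
  rw [← smul_eq_mul, ← lintegral_smul_measure, ← Measure.map_addHaar_smul μ hR]
  exact ((Homeomorph.smulOfNeZero R hR).measurableEmbedding.lintegral_map F).symm

end FourierDerivatives

section FourierSobolev

open scoped FourierTransform SchwartzMap LineDeriv

variable {n : ℕ}

theorem lintegral_enorm_iteratedFDeriv_fourier_apply_sq_le {N : ℕ} {δ : ℝ} (hN : N ≤ δ)
    (w : Fin N → Euc n) (hw : ∀ i, ‖w i‖ ≤ 1) (v : 𝓢(Euc n, ℂ)) :
    ∫⁻ x, ‖iteratedFDeriv ℝ N (𝓕 v : 𝓢(Euc n, ℂ)) x w‖ₑ ^ 2 ≤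
      ENNReal.ofReal ((2 * Real.pi) ^ N) ^ 2 *
        ∫⁻ x, (ENNReal.ofReal (jap x ^ δ) * ‖v x‖ₑ) ^ 2 := by
  obtain ⟨V, hV, hVv⟩ := exists_iteratedLineDeriv_fourier_eq w hw v
  have hVjap (x : Euc n) : ‖V x‖ ≤ (2 * Real.pi) ^ N * (jap x ^ δ * ‖v x‖) := by
    refine (hVv x).trans ?_
    rw [mul_pow, mul_assoc]
    gcongr
    calc ‖x‖ ^ N ≤ jap x ^ N := by gcongr; exact norm_le_jap x
      _ ≤ jap x ^ δ := by
        rw [← Real.rpow_natCast]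
        exact Real.rpow_le_rpow_of_exponent_le (one_le_jap x) hN
  simp_rw [← SchwartzMap.iteratedLineDerivOp_eq_iteratedFDeriv, hV]
  rw [lintegral_enorm_sq_fourier,
    ← lintegral_const_mul' _ _ (ENNReal.pow_ne_top ENNReal.ofReal_ne_top)]
  refine lintegral_mono fun x => ?_
  rw [← mul_pow]
  refine pow_le_pow_left' ?_ 2
  rw [← ofReal_norm, ← ofReal_norm, ← ENNReal.ofReal_mul (jap_rpow_nonneg x δ),
    ← ENNReal.ofReal_mul (by positivity)]
  exact ENNReal.ofReal_le_ofReal (hVjap x)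

theorem exists_lintegral_enorm_iteratedFDeriv_fourier_sq_le (n : ℕ) {N : ℕ} {δ : ℝ} (hN : N ≤ δ) :
    ∃ C : NNReal, ∀ v : 𝓢(Euc n, ℂ),
      ∫⁻ x, ‖iteratedFDeriv ℝ N (𝓕 v : 𝓢(Euc n, ℂ)) x‖ₑ ^ 2 ≤
        C * ∫⁻ x, (ENNReal.ofReal (jap x ^ δ) * ‖v x‖ₑ) ^ 2 := by
  let e := EuclideanSpace.basisFun (Fin n) ℝ
  let c : NNReal := Fintype.card (Fin N → Fin n)
  let b : NNReal := ((2 * Real.pi) ^ N).toNNReal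
  refine ⟨c * (c * b ^ 2), fun v => ?_⟩
  have hbasis (x : Euc n) : ‖iteratedFDeriv ℝ N (𝓕 v : 𝓢(Euc n, ℂ)) x‖ₑ ^ 2 ≤ c *
      ∑ w : Fin N → Fin n, ‖iteratedFDeriv ℝ N (𝓕 v : 𝓢(Euc n, ℂ)) x fun i => e (w i)‖ₑ ^ 2 := by
    have hsum := ENNReal.ofReal_le_ofReal (norm_le_sum_norm_apply_orthonormalBasis e
      (iteratedFDeriv ℝ N (𝓕 v : 𝓢(Euc n, ℂ)) x))
    rw [ofReal_norm, ENNReal.ofReal_sum_of_nonneg fun _ _ => norm_nonneg _] at hsum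
    simp_rw [ofReal_norm] at hsum
    exact (pow_le_pow_left' hsum 2).trans (sum_sq_le_card_mul_sum_sq Finset.univ _)
  have hmeas (w : Fin N → Fin n) :
      Measurable fun x => ‖iteratedFDeriv ℝ N (𝓕 v : 𝓢(Euc n, ℂ)) x fun i => e (w i)‖ₑ ^ 2 := by
    simp_rw [← SchwartzMap.iteratedLineDerivOp_eq_iteratedFDeriv]
    exact ((SchwartzMap.continuous _).enorm.measurable).pow_const 2
  calc ∫⁻ x, ‖iteratedFDeriv ℝ N (𝓕 v : 𝓢(Euc n, ℂ)) x‖ₑ ^ 2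
      ≤ ∫⁻ x, c * ∑ w : Fin N → Fin n,
          ‖iteratedFDeriv ℝ N (𝓕 v : 𝓢(Euc n, ℂ)) x fun i => e (w i)‖ₑ ^ 2 :=
        lintegral_mono hbasis
    _ = c * ∑ w : Fin N → Fin n,
          ∫⁻ x, ‖iteratedFDeriv ℝ N (𝓕 v : 𝓢(Euc n, ℂ)) x fun i => e (w i)‖ₑ ^ 2 := by
        rw [lintegral_const_mul' _ _ ENNReal.coe_ne_top, lintegral_finsetSum _ fun w _ => hmeas w]
    _ ≤ c * ∑ _w : Fin N → Fin n, b ^ 2 * ∫⁻ x, (ENNReal.ofReal (jap x ^ δ) * ‖v x‖ₑ) ^ 2 := by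
        gcongr with w
        exact lintegral_enorm_iteratedFDeriv_fourier_apply_sq_le hN _ (by simp [e]) v
    _ = _ := by
        rw [Finset.sum_const, nsmul_eq_mul, Finset.card_univ]
        push_cast [c]
        ring

theorem exists_lintegral_derivSum_fourier_sq_le (n : ℕ) : ∃ C : NNReal, ∀ v : 𝓢(Euc n, ℂ),
    ∫⁻ x, derivSum (𝓕 v : 𝓢(Euc n, ℂ)) x ^ 2 ≤
      C * ∫⁻ x, (ENNReal.ofReal (jap x ^ (4 : ℝ)) * ‖v x‖ₑ) ^ 2 := by
  choose D hD using fun N : Fin 5 =>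
    exists_lintegral_enorm_iteratedFDeriv_fourier_sq_le n (N := N) (δ := 4)
      (by exact_mod_cast Nat.lt_succ_iff.1 N.2)
  refine ⟨5 * ∑ N, D N, fun v => ?_⟩
  have hmeas (N : Fin 5) :
      Measurable fun x => ‖iteratedFDeriv ℝ N (𝓕 v : 𝓢(Euc n, ℂ)) x‖ₑ ^ 2 :=
    ((((𝓕 v : 𝓢(Euc n, ℂ)).smooth ⊤).continuous_iteratedFDeriv
      (by exact_mod_cast le_top)).enorm.measurable).pow_const 2
  calc ∫⁻ x, derivSum (𝓕 v : 𝓢(Euc n, ℂ)) x ^ 2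
      ≤ ∫⁻ x, 5 * ∑ N : Fin 5, ‖iteratedFDeriv ℝ N (𝓕 v : 𝓢(Euc n, ℂ)) x‖ₑ ^ 2 := by
        refine lintegral_mono fun x => ?_
        rw [derivSum, Finset.sum_range]
        simpa using sum_sq_le_card_mul_sum_sq Finset.univ
          fun N : Fin 5 => ‖iteratedFDeriv ℝ N (𝓕 v : 𝓢(Euc n, ℂ)) x‖ₑ
    _ = 5 * ∑ N : Fin 5, ∫⁻ x, ‖iteratedFDeriv ℝ N (𝓕 v : 𝓢(Euc n, ℂ)) x‖ₑ ^ 2 := by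
        rw [lintegral_const_mul' _ _ (by norm_num), lintegral_finsetSum _ fun N _ => hmeas N]
    _ ≤ 5 * ∑ N, D N * ∫⁻ x, (ENNReal.ofReal (jap x ^ (4 : ℝ)) * ‖v x‖ₑ) ^ 2 := by
        gcongr with N
        exact hD N v
    _ = _ := by
        rw [← Finset.sum_mul]
        push_cast
        ring

theorem exists_schwartz_eq_ft (q : 𝓢(Euc n, ℂ)) : ∃ F : 𝓢(Euc n, ℂ), ⇑F = ft q := by
  have hpi : (2 * Real.pi)⁻¹ ≠ 0 := by positivity
  let dilation : Euc n ≃L[ℝ] Euc n :=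
    ContinuousLinearEquiv.smulLeft (R₁ := ℝ) (M₁ := Euc n) (Units.mk0 (2 * Real.pi)⁻¹ hpi)
  refine ⟨SchwartzMap.compCLMOfContinuousLinearEquiv ℂ dilation (𝓕 q), funext fun ξ => ?_⟩
  have hξ : dilation ξ = (2 * Real.pi)⁻¹ • ξ := rfl
  rw [SchwartzMap.compCLMOfContinuousLinearEquiv_apply, Function.comp_apply, hξ,
    SchwartzMap.fourier_coe, Real.fourier_eq', ft]
  congr! 3 with x
  rw [real_inner_smul_right, real_inner_comm]
  have hphase : -2 * Real.pi * ((2 * Real.pi)⁻¹ * ⟪ξ, x⟫) = -⟪ξ, x⟫ := by field_simp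
  rw [hphase]
  push_cast
  rw [neg_mul, neg_mul, mul_comm]

theorem exists_schwartz_eq_jap_rpow_mul_ft (β : ℝ) (q : 𝓢(Euc n, ℂ)) :
    ∃ g : 𝓢(Euc n, ℂ), ∀ x, g x = ((jap x ^ β : ℝ) : ℂ) * ft q x := by
  obtain ⟨F, hF⟩ := exists_schwartz_eq_ft q
  have hgrowth := Function.hasTemperateGrowth_one_add_norm_sq_rpow (Euc n) (β / 2)
  refine ⟨SchwartzMap.smulLeftCLM ℂ (fun x : Euc n => (1 + ‖x‖ ^ 2) ^ (β / 2)) F, fun x => ?_⟩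
  rw [SchwartzMap.smulLeftCLM_apply_apply hgrowth, hF, jap_rpow, Complex.real_smul]

theorem isBoundedSmooth_schwartz (F : 𝓢(Euc n, ℂ)) : IsBoundedSmooth F where
  contDiff := F.smooth ⊤
  exists_bound N := by
    obtain ⟨B, hB⟩ := F.decay 0 N
    exact ⟨B, fun x => by simpa using hB.2 x⟩

theorem fourierInv_eq_besselD {β : ℝ} {q g : 𝓢(Euc n, ℂ)}
    (hg : ∀ x, g x = ((jap x ^ β : ℝ) : ℂ) * ft q x) (x : Euc n) :
    (𝓕⁻ g : 𝓢(Euc n, ℂ)) x =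
      (((2 * Real.pi) ^ n : ℝ) : ℂ) * besselD β q ((2 * Real.pi) • x) := by
  rw [SchwartzMap.fourierInv_coe, Real.fourierInv_eq', besselD, Complex.real_smul, ← mul_assoc,
    ← Complex.ofReal_mul, mul_inv_cancel₀ (by positivity), Complex.ofReal_one, one_mul]
  congr! 2 with ξ
  rw [hg, real_inner_smul_right, smul_eq_mul]
  congr 2
  ring

theorem lintegral_jap_rpow_mul_fourierInv_sq_le {β δ : ℝ} (hδ : 0 ≤ δ) {q g : 𝓢(Euc n, ℂ)}
    (hg : ∀ x, g x = ((jap x ^ β : ℝ) : ℂ) * ft q x) :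
    ∫⁻ x, (ENNReal.ofReal (jap x ^ δ) * ‖(𝓕⁻ g : 𝓢(Euc n, ℂ)) x‖ₑ) ^ 2 ≤
      ENNReal.ofReal ((2 * Real.pi) ^ n) * wSobNorm β δ q ^ 2 := by
  let R := 2 * Real.pi
  have hR : 1 ≤ R := by linarith [Real.pi_gt_three, show R = 2 * Real.pi from rfl]
  let c := ENNReal.ofReal (R ^ n)
  let F (y : Euc n) : ℝ≥0∞ := ‖jap y ^ δ • besselD β q y‖ₑ ^ 2
  have hFnorm : ∫⁻ y, F y = wSobNorm β δ q ^ 2 := by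
    rw [wSobNorm]
    simpa [F] using (eLpNorm_nnreal_pow_eq_lintegral (μ := volume) (p := 2)
      (f := fun y => jap y ^ δ • besselD β q y) two_ne_zero).symm
  have hpoint (x : Euc n) :
      (ENNReal.ofReal (jap x ^ δ) * ‖(𝓕⁻ g : 𝓢(Euc n, ℂ)) x‖ₑ) ^ 2 ≤ c ^ 2 * F (R • x) := by
    have hjap : jap x ≤ jap (R • x) := by
      have hx : ‖x‖ ≤ 1 * ‖R • x‖ := by
        rw [norm_smul, Real.norm_of_nonneg (by linarith), one_mul]
        exact le_mul_of_one_le_left (norm_nonneg x) hR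
      simpa using jap_le_mul le_rfl hx
    have hconst : ‖((R ^ n : ℝ) : ℂ)‖ₑ = c := by
      rw [← ofReal_norm, Complex.norm_real, Real.norm_of_nonneg (by positivity)]
    rw [← mul_pow, fourierInv_eq_besselD hg, enorm_mul, hconst, enorm_smul, mul_left_comm,
      Real.enorm_of_nonneg (jap_rpow_nonneg _ δ)]
    gcongr
    exact (jap_pos x).le
  calc ∫⁻ x, (ENNReal.ofReal (jap x ^ δ) * ‖(𝓕⁻ g : 𝓢(Euc n, ℂ)) x‖ₑ) ^ 2
      ≤ ∫⁻ x, c ^ 2 * F (R • x) := lintegral_mono hpoint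
    _ = c * (c * ENNReal.ofReal |(R ^ n)⁻¹|) * ∫⁻ y, F y := by
        rw [lintegral_const_mul' _ _ (ENNReal.pow_ne_top ENNReal.ofReal_ne_top),
          lintegral_comp_smul volume (by positivity), finrank_euclideanSpace_fin]
        ring
    _ = c * wSobNorm β δ q ^ 2 := by
        have hRn : 0 < R ^ n := by positivity
        rw [hFnorm, abs_of_pos (inv_pos.2 hRn), ← ENNReal.ofReal_mul hRn.le,
          mul_inv_cancel₀ hRn.ne', ENNReal.ofReal_one, mul_one]

theorem exists_derivSum_ft_le (n : ℕ) (β : ℝ) : ∃ C : NNReal, ∀ q : 𝓢(Euc n, ℂ),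
    ∃ h : Euc n → ℝ≥0∞, Measurable h ∧
      (∀ x, derivSum (ft q) x ≤ ENNReal.ofReal (jap x ^ (-β)) * h x) ∧
      ∫⁻ x, h x ^ 2 ≤ C * wSobNorm β 4 q ^ 2 := by
  obtain ⟨A, hA⟩ := exists_derivSum_jap_rpow_smul_le n (-β)
  obtain ⟨D, hD⟩ := exists_lintegral_derivSum_fourier_sq_le n
  refine ⟨A ^ 2 * (D * ((2 * Real.pi) ^ n).toNNReal), fun q => ?_⟩
  obtain ⟨g, hg⟩ := exists_schwartz_eq_jap_rpow_mul_ft β q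
  have hft : ft q = fun x => jap x ^ (-β) • g x := funext fun x => by
    rw [hg, ← Complex.real_smul, smul_smul, ← Real.rpow_add (jap_pos x), neg_add_cancel,
      Real.rpow_zero, one_smul]
  refine ⟨fun x => A * derivSum g x,
    (continuous_derivSum (g.smooth ⊤)).measurable.const_mul _, fun x => ?_, ?_⟩
  · rw [hft]
    exact hA g (g.smooth ⊤) x
  have hDg := hD (𝓕⁻ g)
  rw [FourierTransform.fourier_fourierInv_eq] at hDg
  calc ∫⁻ x, (A * derivSum g x) ^ 2
      = A ^ 2 * ∫⁻ x, derivSum g x ^ 2 := by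
        simp_rw [mul_pow]
        exact lintegral_const_mul' _ _ (ENNReal.pow_ne_top ENNReal.coe_ne_top)
    _ ≤ A ^ 2 * (D * (ENNReal.ofReal ((2 * Real.pi) ^ n) * wSobNorm β 4 q ^ 2)) := by
        gcongr
        exact hDg.trans
          (mul_le_mul_right (lintegral_jap_rpow_mul_fourierInv_sq_le (by norm_num) hg) _)
    _ = _ := by
        push_cast
        rw [ENNReal.ofReal]
        ring

end FourierSobolev

/-! ### The weighted estimate -/

section WeightedEstimate

open scoped SchwartzMap

variable {m k : ℕ}

theorem partialR_const_zero (l : List (Fin k)) :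
    partialR l (fun _ => (0 : ℂ)) = fun _ => 0 := by
  induction l with
  | nil => rfl
  | cons j l ih =>
    change (fun r => deriv (fun t => partialR l (fun _ => 0) (Function.update r j t)) (r j)) = _
    simp only [ih, deriv_const']

theorem ofReal_mul_Sj_eq_eval {q : Euc (m + 1) → ℂ} (hq : Continuous (ft q)) {η : Euc (m + 1)}
    (hη : η ≠ 0) (x : ℝ) {r : Fin k → ℝ} (hr : ∀ i, 0 < r i) :
    (x : ℂ) * Sj k r q η =
      (LeibnizTerm.init (x * (‖η‖ ^ (-(k : ℝ)) * ((‖η‖ / 2) ^ m) ^ k))).eval m (ft q) η r := by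
  have hint : chainIntegral (ft q) η (fun _ => []) r =
      ∫ θ, ∏ i, ft q (chainDiff k η (ewaldPoint η r θ) i) ∂(sphereMeasurePi (m + 1) k) := rfl
  rw [Sj_eq_smul_integral_sphereMeasurePi hq hη hr, Complex.real_smul, ← hint, ← mul_assoc,
    ← Complex.ofReal_mul, mul_left_comm, mul_comm (∏ i, ewaldFactor m (r i))]
  simp only [LeibnizTerm.eval, LeibnizTerm.init, ewaldFactorProd, Bool.false_eq_true, if_false,
    mul_assoc]

theorem jap_le_two_mul_norm {n : ℕ} {η : Euc n} (hη : 1 ≤ ‖η‖) : jap η ≤ 2 * ‖η‖ := by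
  rw [jap, Real.sqrt_le_left (by positivity)]
  nlinarith

theorem mul_ewaldFactor_mul_rpow_le {η : Euc (m + 1)} (hη : 1 ≤ ‖η‖) {r e : ℝ} (hr : 0 < r)
    (he : e ≤ 1) :
    ‖η‖⁻¹ * (‖η‖ / 2) ^ m * ewaldFactor m r *
        (((r * (‖η‖ / 2)) ^ m)⁻¹ * (1 + r * (‖η‖ / 2)) ^ (1 - e)) ≤
      4 * jap η ^ (-e) * (1 + r) ^ (-e) := by
  have hN : 0 < ‖η‖ := by linarith
  have hJ := jap_pos η
  have hNJ := norm_le_jap η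
  have hcancel : ‖η‖⁻¹ * (‖η‖ / 2) ^ m * ewaldFactor m r * ((r * (‖η‖ / 2)) ^ m)⁻¹ =
      ‖η‖⁻¹ * (2 / (1 + r)) := by
    rw [ewaldFactor, mul_pow]
    field_simp
  have hinv : ‖η‖⁻¹ ≤ 2 / jap η := by
    rw [inv_eq_one_div, div_le_div_iff₀ hN hJ, one_mul]
    exact jap_le_two_mul_norm hη
  have hbase : 1 + r * (‖η‖ / 2) ≤ (1 + r) * jap η := by nlinarith
  calc _ = ‖η‖⁻¹ * (2 / (1 + r)) * (1 + r * (‖η‖ / 2)) ^ (1 - e) := by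
        rw [← hcancel]
        ring
    _ ≤ 2 / jap η * (2 / (1 + r)) * ((1 + r) * jap η) ^ (1 - e) := by
        gcongr
    _ = 4 * jap η ^ (-e) * (1 + r) ^ (-e) := by
        rw [Real.mul_rpow (by positivity) hJ.le, sub_eq_add_neg, Real.rpow_add (by positivity),
          Real.rpow_add hJ, Real.rpow_one, Real.rpow_one]
        field_simp
        ring

theorem mul_prod_ewaldFactor_mul_rpow_le {η : Euc (m + 1)} (hη : 1 ≤ ‖η‖) {r : Fin k → ℝ} {e : ℝ}
    (hr : ∀ i, 0 < r i) (he : e ≤ 1) :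
    ‖η‖ ^ (-(k : ℝ)) * ((‖η‖ / 2) ^ m) ^ k * (∏ i, ewaldFactor m (r i)) *
        ((∏ i, (r i * (‖η‖ / 2)) ^ m)⁻¹ * ∏ i, (1 + r i * (‖η‖ / 2)) ^ (1 - e)) ≤
      4 ^ k * jap η ^ (-(k * e)) * ∏ i, (1 + r i) ^ (-e) := by
  have hJ := jap_pos η
  calc _ = ∏ i, (‖η‖⁻¹ * (‖η‖ / 2) ^ m * ewaldFactor m (r i) *
          (((r i * (‖η‖ / 2)) ^ m)⁻¹ * (1 + r i * (‖η‖ / 2)) ^ (1 - e))) := by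
        simp only [Finset.prod_mul_distrib, Finset.prod_const, Finset.card_univ, Fintype.card_fin,
          Finset.prod_inv_distrib, Real.rpow_neg (norm_nonneg η), Real.rpow_natCast, inv_pow]
    _ ≤ ∏ i, (4 * jap η ^ (-e) * (1 + r i) ^ (-e)) := by
        refine Finset.prod_le_prod (fun i _ => ?_) fun i _ =>
          mul_ewaldFactor_mul_rpow_le hη (hr i) he
        have := hr i
        have := ewaldFactor_pos m (hr i)
        positivity
    _ = _ := by
        simp only [Finset.prod_mul_distrib, Finset.prod_const, Finset.card_univ, Fintype.card_fin]
        rw [← Real.rpow_natCast (jap η ^ (-e)), ← Real.rpow_mul hJ.le, neg_mul, mul_comm e]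

theorem jap_rpow_mul_prod_le {η : Euc (m + 1)} (hη : 1 ≤ ‖η‖) {r : Fin k → ℝ} {e α β x K : ℝ}
    (hr : ∀ i, 0 < r i) (he : e ≤ 1) (hα : α ≤ β + k * e) (hx : |x| ≤ 1) (hK : 0 ≤ K) (L : ℕ) :
    jap η ^ (α - L) * (|x * (‖η‖ ^ (-(k : ℝ)) * ((‖η‖ / 2) ^ m) ^ k)| * jap η ^ L *
        (K ^ k * ∏ i, ewaldFactor m (r i))) * ((∏ i, (r i * (‖η‖ / 2)) ^ m)⁻¹ *
          (jap η ^ (-β) * ∏ i, (1 + r i * (‖η‖ / 2)) ^ (1 - e))) ≤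
      K ^ k * 4 ^ k * ∏ i, (1 + r i) ^ (-e) := by
  have hJ := jap_pos η
  have hbalance : jap η ^ (α - L) * jap η ^ L * jap η ^ (-β) * jap η ^ (-(k * e)) ≤ 1 := by
    rw [← Real.rpow_natCast, ← Real.rpow_add hJ, ← Real.rpow_add hJ, ← Real.rpow_add hJ]
    exact Real.rpow_le_one_of_one_le_of_nonpos (one_le_jap η) (by linarith)
  have hP : 0 ≤ ∏ i, (1 + r i) ^ (-e) :=
    Finset.prod_nonneg fun i _ => Real.rpow_nonneg (by linarith [hr i]) _
  calc _ = |x| * K ^ k * ((jap η ^ (α - L) * jap η ^ L * jap η ^ (-β)) *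
        (‖η‖ ^ (-(k : ℝ)) * ((‖η‖ / 2) ^ m) ^ k * (∏ i, ewaldFactor m (r i)) *
          ((∏ i, (r i * (‖η‖ / 2)) ^ m)⁻¹ * ∏ i, (1 + r i * (‖η‖ / 2)) ^ (1 - e)))) := by
        rw [abs_mul, abs_of_nonneg (a := ‖η‖ ^ (-(k : ℝ)) * ((‖η‖ / 2) ^ m) ^ k) (by positivity)]
        ring
    _ ≤ |x| * K ^ k * ((jap η ^ (α - L) * jap η ^ L * jap η ^ (-β)) *
        (4 ^ k * jap η ^ (-(k * e)) * ∏ i, (1 + r i) ^ (-e))) := by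
        gcongr ?_ * (?_ * ?_)
        exact mul_prod_ewaldFactor_mul_rpow_le hη hr he
    _ = |x| * (jap η ^ (α - L) * jap η ^ L * jap η ^ (-β) * jap η ^ (-(k * e))) *
        (K ^ k * 4 ^ k * ∏ i, (1 + r i) ^ (-e)) := by ring
    _ ≤ _ := mul_le_of_le_one_left (by positivity) (mul_le_one₀ hx (by positivity) hbalance)

theorem exists_lintegral_enorm_chainProd_le_chainWeight (k : ℕ) {e β : ℝ} (hβ : 0 ≤ β) (he : e < 1)
    (hp : 0 ≤ m - 2 + 2 * e) (hpβ : m - 2 + 2 * e ≤ 2 * β) :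
    ∃ C : NNReal, ∀ (f : Euc (m + 1) → ℂ) (h : Euc (m + 1) → ℝ≥0∞), ContDiff ℝ (⊤ : ℕ∞) f →
      Measurable h → (∀ x, derivSum f x ≤ ENNReal.ofReal (jap x ^ (-β)) * h x) →
      ∀ (η c : Euc (m + 1)) (w : Fin (k + 1) → List (Fin k)) (ρ : Fin k → ℝ),
        (∀ i, (w i).length ≤ 2) → (∀ i, 0 < ρ i) →
        ∫⁻ θ, ‖chainProd f η c w θ ρ‖ₑ ∂(sphereMeasurePi (m + 1) k) ≤
          C * ENNReal.ofReal ((∏ i, ρ i ^ m)⁻¹ * (jap η ^ (-β) * ∏ i, (1 + ρ i) ^ (1 - e))) *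
            (∫⁻ y : Fin k → Euc (m + 1), chainWeight (fun x => h x ^ 2) η c y) ^ (1 / 2 : ℝ) := by
  obtain ⟨A, hA⟩ := exists_lintegral_enorm_chainProd_le m k
  obtain ⟨B, hB⟩ := exists_lintegral_chainWeight_le (m := m) k hβ hp (by linarith) hpβ
  refine ⟨A * B, fun f h hf hh hfh η c w ρ hw hρ => ?_⟩
  have hweight := hB η c ρ hρ _ h hh hfh
  rw [show (m - (m - 2 + 2 * e)) / 2 = 1 - e by ring] at hweight
  refine ((hA f hf η c w hw ρ hρ).trans (mul_le_mul_right hweight _)).trans_eq ?_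
  have hinv : 0 ≤ (∏ i, ρ i ^ m)⁻¹ :=
    inv_nonneg.2 (Finset.prod_nonneg fun i _ => pow_nonneg (hρ i).le _)
  rw [ENNReal.ofReal_mul hinv]
  push_cast
  ring

theorem exists_enorm_jap_rpow_smul_partialR_le {δ e α β : ℝ} (hδ : δ < 1) (hβ : 0 ≤ β)
    (he : e < 1) (hp : 0 ≤ m - 2 + 2 * e) (hpβ : m - 2 + 2 * e ≤ 2 * β) (hα : α ≤ β + k * e)
    {l : List (Fin k)} (hl : l.Nodup) :
    ∃ C : NNReal, ∀ (q : Euc (m + 1) → ℂ) (h : Euc (m + 1) → ℝ≥0∞), IsBoundedSmooth (ft q) →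
      Measurable h → (∀ x, derivSum (ft q) x ≤ ENNReal.ofReal (jap x ^ (-β)) * h x) →
      ∀ (η : Euc (m + 1)) (x : ℝ) (r : Fin k → ℝ), 1 ≤ ‖η‖ → |x| ≤ 1 → (∀ i, 0 < r i) →
        (∀ i ∈ l, 1 - δ < r i) →
        ‖(jap η ^ (α - l.length) : ℝ) • partialR l (fun s => (x : ℂ) * Sj k s q η) r‖ₑ ≤
          C * ENNReal.ofReal (∏ i, (1 + r i) ^ (-e)) *
            (∫⁻ y : Fin k → Euc (m + 1), chainWeight (fun x => h x ^ 2) η ((2 : ℝ)⁻¹ • η) y) ^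
              (1 / 2 : ℝ) := by
  obtain ⟨K, hK1, hK⟩ := exists_abs_deriv_ewaldFactor_le m hδ
  obtain ⟨A, hA⟩ := exists_lintegral_enorm_chainProd_le_chainWeight (m := m) k hβ he hp hpβ
  refine ⟨3 ^ l.length * A * (K ^ k * 4 ^ k).toNNReal,
    fun q h hq hh hqh η x r hη hx hr hlr => ?_⟩
  have hη0 : η ≠ 0 := norm_pos_iff.1 (by linarith)
  have hρ (i) : 0 < r i * (‖η‖ / 2) := mul_pos (hr i) (by linarith)
  have hJ := jap_rpow_nonneg η (α - l.length)
  have hderiv := enorm_partialR_le hq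
    (fun s hs => ofReal_mul_Sj_eq_eval hq.contDiff.continuous hη0 x hs) hl hr
    (one_le_jap η) (by linarith [norm_le_jap η]) hK1 (fun i hi => hK _ (hlr i hi))
    fun w hw => hA (ft q) h hq.contDiff hh hqh η _ w _ hw hρ
  have hreal := ENNReal.ofReal_le_ofReal <|
    jap_rpow_mul_prod_le (β := β) hη hr he.le hα hx (zero_le_one.trans hK1) l.length
  set Q := (∫⁻ y : Fin k → Euc (m + 1), chainWeight (fun x => h x ^ 2) η ((2 : ℝ)⁻¹ • η) y) ^
    (1 / 2 : ℝ)
  set T := |x * (‖η‖ ^ (-(k : ℝ)) * ((‖η‖ / 2) ^ m) ^ k)| * jap η ^ l.length *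
    (K ^ k * ∏ i, ewaldFactor m (r i))
  set R := (∏ i, (r i * (‖η‖ / 2)) ^ m)⁻¹ *
    (jap η ^ (-β) * ∏ i, (1 + r i * (‖η‖ / 2)) ^ (1 - e))
  have hT : 0 ≤ T := by
    have := jap_pos η
    have := Finset.prod_nonneg fun i (_ : i ∈ Finset.univ) => (ewaldFactor_pos m (hr i)).le
    positivity
  have hK4 : 0 ≤ K ^ k * 4 ^ k := by positivity
  rw [ENNReal.ofReal_mul (mul_nonneg hJ hT), ENNReal.ofReal_mul hJ,
    ENNReal.ofReal_mul (q := ∏ i, (1 + r i) ^ (-e)) hK4] at hreal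
  rw [enorm_smul, Real.enorm_of_nonneg hJ]
  calc _ ≤ ENNReal.ofReal (jap η ^ (α - l.length)) *
          (3 ^ l.length * (ENNReal.ofReal T * (A * ENNReal.ofReal R * Q))) := by gcongr
    _ = 3 ^ l.length * A * (ENNReal.ofReal (jap η ^ (α - l.length)) * ENNReal.ofReal T *
          ENNReal.ofReal R) * Q := by ring
    _ ≤ 3 ^ l.length * A * (ENNReal.ofReal (K ^ k * 4 ^ k) *
          ENNReal.ofReal (∏ i, (1 + r i) ^ (-e))) * Q :=
        mul_le_mul' (mul_le_mul' le_rfl hreal) le_rfl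
    _ = _ := by
        rw [ENNReal.ofReal]
        push_cast
        ring

theorem eLpNorm_two_le_mul_lintegral_rpow {X F : Type*} [MeasurableSpace X] {μ : Measure X}
    [NormedAddCommGroup F] {f : X → F} {Q : X → ℝ≥0∞} {c : NNReal}
    (h : ∀ x, ‖f x‖ₑ ≤ c * Q x ^ (1 / 2 : ℝ)) :
    eLpNorm f 2 μ ≤ c * (∫⁻ x, Q x ∂μ) ^ (1 / 2 : ℝ) := by
  refine (eLpNorm_le_mul_eLpNorm_of_ae_le_mul' (g := fun x => Q x ^ (1 / 2 : ℝ))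
    (ae_of_all _ h) 2).trans_eq ?_
  rw [eLpNorm_eq_lintegral_rpow_enorm_toReal (by norm_num) (by norm_num)]
  have hroot (x) : (Q x ^ (1 / 2 : ℝ)) ^ (2 : ℝ) = Q x := by
    rw [← ENNReal.rpow_mul]
    norm_num
  simp only [enorm_eq_self, ENNReal.toReal_ofNat, hroot]

theorem exists_eLpNorm_jap_rpow_smul_partialR_le {δ e α β : ℝ} (hδ : δ < 1) (hβ : 0 ≤ β)
    (he : e < 1) (hp : 0 ≤ m - 2 + 2 * e) (hpβ : m - 2 + 2 * e ≤ 2 * β) (hα : α ≤ β + k * e)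
    {l : List (Fin k)} (hl : l.Nodup) :
    ∃ C : NNReal, ∀ χ : Euc (m + 1) → ℝ, (∀ ξ, |χ ξ| ≤ 1) → (∀ ξ, ‖ξ‖ < 1 → χ ξ = 0) →
      ∀ (q : 𝓢(Euc (m + 1), ℂ)) (r : Fin k → ℝ), (∀ i, 0 < r i) → (∀ i ∈ l, 1 - δ < r i) →
        eLpNorm (fun η => (jap η ^ (α - l.length) : ℝ) •
            partialR l (fun s => (χ η : ℂ) * Sj k s q η) r) 2 volume ≤
          C * ENNReal.ofReal (∏ i, (1 + r i) ^ (-e)) * wSobNorm β 4 q ^ (k + 1) := by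
  obtain ⟨A, hA⟩ := exists_enorm_jap_rpow_smul_partialR_le hδ hβ he hp hpβ hα hl
  obtain ⟨D, hD⟩ := exists_derivSum_ft_le (m + 1) β
  refine ⟨A * (D ^ (k + 1)) ^ (1 / 2 : ℝ), fun χ hχ1 hχ0 q r hr hlr => ?_⟩
  obtain ⟨h, hh, hqh, hint⟩ := hD q
  obtain ⟨F, hF⟩ := exists_schwartz_eq_ft q
  have hq : IsBoundedSmooth (ft q) := hF ▸ isBoundedSmooth_schwartz F
  set P := ENNReal.ofReal (∏ i, (1 + r i) ^ (-e))
  let Q (η : Euc (m + 1)) : ℝ≥0∞ :=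
    ∫⁻ y : Fin k → Euc (m + 1), chainWeight (fun x => h x ^ 2) η ((2 : ℝ)⁻¹ • η) y
  have hpoint (η : Euc (m + 1)) : ‖(jap η ^ (α - l.length) : ℝ) •
      partialR l (fun s => (χ η : ℂ) * Sj k s q η) r‖ₑ ≤ A * P * Q η ^ (1 / 2 : ℝ) := by
    obtain hη | hη := lt_or_ge ‖η‖ 1
    · simp [hχ0 η hη, partialR_const_zero]
    · exact hA q h hq hh hqh η (χ η) r hη (hχ1 η) hr hlr
  have hQ : ∫⁻ η, Q η ≤ (D * wSobNorm β 4 q ^ 2) ^ (k + 1) :=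
    (lintegral_lintegral_chainWeight_le (hh.pow_const 2) _).trans (by gcongr)
  calc _ ≤ (A * (∏ i, (1 + r i) ^ (-e)).toNNReal : NNReal) * (∫⁻ η, Q η) ^ (1 / 2 : ℝ) :=
        eLpNorm_two_le_mul_lintegral_rpow fun η => by exact_mod_cast hpoint η
    _ ≤ A * P * ((D * wSobNorm β 4 q ^ 2) ^ (k + 1)) ^ (1 / 2 : ℝ) := by
        push_cast
        gcongr
        rfl
    _ = _ := by
        have hsqrt : ((wSobNorm β 4 q ^ 2) ^ (k + 1)) ^ (1 / 2 : ℝ) = wSobNorm β 4 q ^ (k + 1) := by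
          rw [pow_right_comm, ← ENNReal.rpow_natCast _ 2, ← ENNReal.rpow_mul]
          norm_num
        rw [mul_pow, ENNReal.mul_rpow_of_nonneg _ _ (by norm_num), hsqrt, ENNReal.coe_mul,
          ENNReal.coe_rpow_of_nonneg _ (by norm_num), ENNReal.coe_pow]
        ring

theorem exists_decay_exponent {β α : ℝ} (hm : 1 ≤ m) (hβ0 : 0 ≤ β)
    (hrange : (((m : ℝ) - 2) / 2 < β ∧ β < (m : ℝ) / 2 ∧ α ≤ β + k * (β - ((m : ℝ) - 2) / 2)) ∨
      ((m : ℝ) / 2 ≤ β ∧ α < β + k)) :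
    ∃ e : ℝ, 0 < e ∧ e < 1 ∧ 0 ≤ m - 2 + 2 * e ∧ m - 2 + 2 * e ≤ 2 * β ∧ α ≤ β + k * e := by
  obtain ⟨hβ, hβ', hα⟩ | ⟨hβ, hα⟩ := hrange
  · exact ⟨β - (m - 2) / 2, by linarith, by linarith, by linarith, by linarith, hα⟩
  · have hm' : (1 : ℝ) ≤ m := by exact_mod_cast hm
    have hgap : 0 < (β + k - α) / (k + 1) := div_pos (by linarith) (by positivity)
    refine ⟨max (1 / 2) (1 - (β + k - α) / (k + 1)), by positivity,
      max_lt (by norm_num) (by linarith), ?_, ?_, ?_⟩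
    · linarith [le_max_left (1 / 2) (1 - (β + k - α) / (k + 1))]
    · linarith [max_lt (by norm_num : (1 / 2 : ℝ) < 1) (sub_lt_self 1 hgap)]
    · have hle : k * (1 - (β + k - α) / (k + 1)) ≤
          k * max (1 / 2) (1 - (β + k - α) / (k + 1)) := by
        gcongr
        exact le_max_right _ _
      have hmul : (β + k - α) / (k + 1) * (k + 1) = β + k - α := by field_simp
      nlinarith

end WeightedEstimate

theorem stmt10_general (n k : ℕ) (hn : 2 ≤ n) (δ : ℝ) (hδ1 : δ < 1) (β α : ℝ) (hβ : 0 ≤ β)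
    (hrange : (((n : ℝ) - 3) / 2 < β ∧ β < ((n : ℝ) - 1) / 2 ∧
        α ≤ β + (k : ℝ) * (β - ((n : ℝ) - 3) / 2)) ∨
      (((n : ℝ) - 1) / 2 ≤ β ∧ α < β + (k : ℝ)))
    (a : Fin k → Bool) :
    ∃ γ C : ℝ, 0 < γ ∧ 0 < C ∧
      (∀ (q : SchwartzMap (Euc n) ℂ) (η : Euc n), η ≠ 0 →
        ContDiffOn ℝ (⊤ : ℕ∞) (fun s : Fin k → ℝ => Sj k s q η) {s | ∀ i, 0 < s i}) ∧
      ∀ χ : Euc n → ℝ, (∀ ξ, |χ ξ| ≤ 1) → (∀ ξ, ‖ξ‖ < 1 → χ ξ = 0) →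
        ∀ (q : SchwartzMap (Euc n) ℂ) (r : Fin k → ℝ), (∀ i, 0 < r i) →
          (∀ i, a i = true → 1 - δ < r i) →
          eLpNorm (fun η : Euc n => (jap η ^ (α - ((onesList a).length : ℝ)) : ℝ) •
              partialR (onesList a) (fun s => (χ η : ℂ) * Sj k s q η) r) 2 volume ≤
            ENNReal.ofReal (C * ∏ i, (1 + r i) ^ (-γ)) * wSobNorm β 4 q ^ (k + 1) := by
  obtain ⟨m, rfl⟩ : ∃ m, n = m + 1 := ⟨n - 1, by lia⟩
  have h3 : ((m + 1 : ℕ) : ℝ) - 3 = m - 2 := by push_cast; ring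
  have h1 : ((m + 1 : ℕ) : ℝ) - 1 = m := by push_cast; ring
  rw [h3, h1] at hrange
  obtain ⟨e, he0, he1, hp, hpβ, hα⟩ := exists_decay_exponent (by lia) hβ hrange
  obtain ⟨C, hC⟩ := exists_eLpNorm_jap_rpow_smul_partialR_le hδ1 hβ he1 hp hpβ hα
    (l := onesList a) ((List.nodup_finRange k).filter _)
  refine ⟨e, C + 1, he0, by positivity, fun q η hη => ?_, fun χ hχ1 hχ0 q r hr har => ?_⟩
  · obtain ⟨F, hF⟩ := exists_schwartz_eq_ft q
    exact contDiffOn_Sj (hF ▸ (isBoundedSmooth_schwartz F).contDiff) hη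
  · refine (hC χ hχ1 hχ0 q r hr fun i hi => har i (by simpa [onesList] using hi)).trans ?_
    rw [ENNReal.ofReal_mul (by positivity), ← ENNReal.ofReal_coe_nnreal]
    gcongr
    exact le_add_of_nonneg_right zero_le_one

/-- the spherical operators `χ·S_{j,𝐫}(q)` (`j = k + 1 ≥ 3`) are smooth in
`𝐫` on `(0,∞)^{j-1}` and their derivatives `∂_𝐫^𝐚` satisfy the weighted `L²_{α-|𝐚|}`
estimate with constant `C ∏(1+rᵢ)^{-γ}` against `‖q‖ʲ_{W^{β,2}_4}`. -/
theorem stmt10 (n k : ℕ) (hn : 2 ≤ n) (hk : 2 ≤ k) (δ : ℝ) (hδ0 : 0 < δ) (hδ1 : δ < 1)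
    (β α : ℝ) (hβ : 0 ≤ β)
    (hrange : (((n : ℝ) - 3) / 2 < β ∧ β < ((n : ℝ) - 1) / 2 ∧
        α ≤ β + (k : ℝ) * (β - ((n : ℝ) - 3) / 2)) ∨
      (((n : ℝ) - 1) / 2 ≤ β ∧ α < β + (k : ℝ)))
    (a : Fin k → Bool)
    (C₀ : ℝ) (hC₀ : 1 ≤ C₀) (χ : Euc n → ℝ) (hχsm : ContDiff ℝ (⊤ : ℕ∞) χ)
    (hχ01 : ∀ ξ, χ ξ ∈ Set.Icc (0 : ℝ) 1)
    (hχ1 : ∀ ξ : Euc n, 2 * C₀ < ‖ξ‖ → χ ξ = 1)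
    (hχ0 : ∀ ξ : Euc n, ‖ξ‖ < C₀ → χ ξ = 0) :
    ∃ γ C : ℝ, 0 < γ ∧ 0 < C ∧
      (∀ (q : SchwartzMap (Euc n) ℂ) (η : Euc n), η ≠ 0 →
        ContDiffOn ℝ (⊤ : ℕ∞) (fun s : Fin k → ℝ => (χ η : ℂ) * Sj k s (⇑q) η)
          {s : Fin k → ℝ | ∀ i, 0 < s i}) ∧
      ∀ (q : SchwartzMap (Euc n) ℂ) (r : Fin k → ℝ),
        (∀ i, a i = true → r i ∈ Set.Ioo (1 - δ) (1 + δ)) →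
        (∀ i, a i = false → 0 < r i) →
        eLpNorm (fun η : Euc n => (jap η ^ (α - ((onesList a).length : ℝ)) : ℝ) •
            partialR (onesList a) (fun s => (χ η : ℂ) * Sj k s (⇑q) η) r) 2 volume
          ≤ ENNReal.ofReal (C * ∏ i : Fin k, (1 + r i) ^ (-γ)) *
            (wSobNorm β 4 (⇑q)) ^ (k + 1) := by
  obtain ⟨γ, C, hγ, hC, hsmooth, hbound⟩ := stmt10_general n k hn δ hδ1 β α hβ hrange a
  have hχ (ξ) : |χ ξ| ≤ 1 := by rw [abs_of_nonneg (hχ01 ξ).1]; exact (hχ01 ξ).2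
  refine ⟨γ, C, hγ, hC, fun q η hη => contDiffOn_const.mul (hsmooth q η hη), fun q r ha ha' =>
    hbound χ hχ (fun ξ hξ => hχ0 ξ (hξ.trans_le hC₀)) q r (fun i => ?_) fun i hi => (ha i hi).1⟩
  obtain hi | hi := Bool.eq_false_or_eq_true (a i)
  · linarith [(ha i hi).1]
  · exact ha' i hi
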